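/- arXiv:2206.06742 — 2 statements merged into one kernel-verified Lean document; each statement's English description precedes it below -/
import Mathlib

section
/- Assume 0 ≤ α < N, p, q > 0, ρ > 0, μ ∈ ℝ, and that the Dirichlet eigenpair hypothesis holds for (Ω, λ₁, φ). If μ > C_{H,Ω} = λ₁ + ((N−2)/2)², then the inequality (E): −Δu − μ|x|^{−2}u ≥ (|x|^{−α} * u^p) u^q has no positive solution in C_Ω^ρ. -/
open MeasureTheory Real Set
open scoped ENNReal NNReal

noncomputable section

/-- Euclidean space `ℝ^N`. -/
abbrev Euc (N : ℕ) := EuclideanSpace ℝ (Fin N)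

/-- The Euclidean Laplacian `Δu(x) = ∑ ∂²u/∂xᵢ²(x)`, the trace of the Hessian. -/
def lap (N : ℕ) (u : Euc N → ℝ) (x : Euc N) : ℝ :=
  ∑ i : Fin N,
    iteratedFDeriv ℝ 2 u x ![EuclideanSpace.single i 1, EuclideanSpace.single i 1]

/-- The open cone `C_Ω^ρ = {x : |x| > ρ, x/|x| ∈ Ω}`. -/
def coneGT (N : ℕ) (ρ : ℝ) (Ω : Set (Euc N)) : Set (Euc N) :=
  {x | ρ < ‖x‖ ∧ ‖x‖⁻¹ • x ∈ Ω}

/-- The full open cone `C_Ω = {x ≠ 0 : x/|x| ∈ Ω}`. -/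
def cone (N : ℕ) (Ω : Set (Euc N)) : Set (Euc N) :=
  {x | x ≠ 0 ∧ ‖x‖⁻¹ • x ∈ Ω}

/-- `Ω` is a nonempty, connected, relatively open subset of the unit sphere `S^{N-1}`. -/
def IsConeDomain (N : ℕ) (Ω : Set (Euc N)) : Prop :=
  Ω ⊆ Metric.sphere (0 : Euc N) 1 ∧ IsConnected Ω ∧
    IsOpen {ω : Metric.sphere (0 : Euc N) 1 | (ω : Euc N) ∈ Ω}

/-- The convolution `(|x|^{-α} * f)(x) = ∫_{C_Ω^ρ} f(y)|x-y|^{-α} dy`, valued in `[0,∞]`. -/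
def rieszConv (N : ℕ) (α ρ : ℝ) (Ω : Set (Euc N)) (f : Euc N → ℝ) (x : Euc N) : ℝ≥0∞ :=
  ∫⁻ y in coneGT N ρ Ω, ENNReal.ofReal (f y * ‖x - y‖ ^ (-α))

/-- Dirichlet eigenpair hypothesis for `(Ω, λ₁, φ)`: `φ` is continuous on the closure of `Ω`,
positive on `Ω`, vanishing on the relative boundary, with maximum `1`, and its 0-homogeneous
extension `Φ(x) = φ(x/|x|)` is `C²` on the open cone and satisfies `ΔΦ = -λ₁|x|⁻²Φ`. -/
structure DirichletEigenpair (N : ℕ) (Ω : Set (Euc N)) (lam1 : ℝ) (φ : Euc N → ℝ) : Prop where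
  contOn : ContinuousOn φ (closure Ω)
  pos : ∀ ω ∈ Ω, 0 < φ ω
  bdryZero : ∀ ω ∈ closure Ω \ Ω, φ ω = 0
  le_one : ∀ ω ∈ closure Ω, φ ω ≤ 1
  max_one : ∃ ω ∈ closure Ω, φ ω = 1
  smoothExt : ContDiffOn ℝ 2 (fun x => φ (‖x‖⁻¹ • x)) (cone N Ω)
  eigen : ∀ x ∈ cone N Ω,
    lap N (fun y => φ (‖y‖⁻¹ • y)) x = -lam1 * ‖x‖ ^ (-(2:ℝ)) * φ (‖x‖⁻¹ • x)

/-- The Hardy constant `C_{H,Ω} = λ₁ + ((N-2)/2)²`. -/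
def CHconst (N : ℕ) (lam1 : ℝ) : ℝ := lam1 + (((N : ℝ) - 2) / 2) ^ 2

/-- The smaller root `γ_*` of `γ(γ + N - 2) = λ₁ - μ`. -/
def gammaStar (N : ℕ) (lam1 μ : ℝ) : ℝ :=
  (-((N : ℝ) - 2) - Real.sqrt (((N : ℝ) - 2) ^ 2 + 4 * (lam1 - μ))) / 2

/-- A positive (classical) solution of `(E) : -Δu - μ|x|⁻²u ≥ (|x|^{-α} * uᵖ) u^q` in `C_Ω^ρ`. -/
def IsPosSolE (N : ℕ) (ρ μ α p q : ℝ) (Ω : Set (Euc N)) (u : Euc N → ℝ) : Prop :=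
  ContDiffOn ℝ 2 u (coneGT N ρ Ω) ∧
  ContinuousOn u (closure (coneGT N ρ Ω)) ∧
  (∀ x ∈ coneGT N ρ Ω, 0 < u x) ∧
  (∀ x ∈ coneGT N ρ Ω, rieszConv N α ρ Ω (fun y => u y ^ p) x < ⊤) ∧
  (∀ x ∈ coneGT N ρ Ω,
    (rieszConv N α ρ Ω (fun y => u y ^ p) x).toReal * u x ^ q ≤
      -lap N u x - μ * ‖x‖ ^ (-(2:ℝ)) * u x)

/-- A positive solution of `(Z) : -Δu - μ|x|⁻²u ≥ (∫_{C_Ω^ρ} uᵖ) u^q` in `C_Ω^ρ`. -/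
def IsPosSolZ (N : ℕ) (ρ μ p q : ℝ) (Ω : Set (Euc N)) (u : Euc N → ℝ) : Prop :=
  ContDiffOn ℝ 2 u (coneGT N ρ Ω) ∧
  ContinuousOn u (closure (coneGT N ρ Ω)) ∧
  (∀ x ∈ coneGT N ρ Ω, 0 < u x) ∧
  (∫⁻ y in coneGT N ρ Ω, ENNReal.ofReal (u y ^ p)) < ⊤ ∧
  (∀ x ∈ coneGT N ρ Ω,
    (∫⁻ y in coneGT N ρ Ω, ENNReal.ofReal (u y ^ p)).toReal * u x ^ q ≤
      -lap N u x - μ * ‖x‖ ^ (-(2:ℝ)) * u x)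

/-- A positive solution `(u, v)` of the system `(S)` in `C_Ω^ρ`. -/
def IsPosSolS (N : ℕ) (ρ μ α p q s : ℝ) (Ω : Set (Euc N)) (u v : Euc N → ℝ) : Prop :=
  ContDiffOn ℝ 2 u (coneGT N ρ Ω) ∧ ContinuousOn u (closure (coneGT N ρ Ω)) ∧
  ContDiffOn ℝ 2 v (coneGT N ρ Ω) ∧ ContinuousOn v (closure (coneGT N ρ Ω)) ∧
  (∀ x ∈ coneGT N ρ Ω, 0 < u x) ∧ (∀ x ∈ coneGT N ρ Ω, 0 < v x) ∧
  (∀ x ∈ coneGT N ρ Ω, rieszConv N α ρ Ω (fun y => v y ^ p) x < ⊤) ∧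
  (∀ x ∈ coneGT N ρ Ω,
    (rieszConv N α ρ Ω (fun y => v y ^ p) x).toReal * v x ^ q ≤
      -lap N u x - μ * ‖x‖ ^ (-(2:ℝ)) * u x) ∧
  (∀ x ∈ coneGT N ρ Ω, u x ^ s ≤ -lap N v x - μ * ‖x‖ ^ (-(2:ℝ)) * v x)


/-- Second directional derivatives give the Laplacian. -/
lemma lap_eq_sum {N : ℕ} {f : Euc N → ℝ} {x : Euc N} (hf : ContDiffAt ℝ 2 f x) :
    lap N f x = ∑ i : Fin N, fderiv ℝ (fun y => fderiv ℝ f y (EuclideanSpace.single i 1)) x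
      (EuclideanSpace.single i 1) := by
  unfold lap
  refine Finset.sum_congr rfl fun i _ => ?_
  have h1 : DifferentiableAt ℝ (fderiv ℝ f) x :=
    (hf.fderiv_right (m := 1) (by norm_num)).differentiableAt (by norm_num)
  rw [iteratedFDeriv_two_apply, fderiv_clm_apply h1 (differentiableAt_const _)]
  simp

lemma dir_contDiffAt {N : ℕ} {f : Euc N → ℝ} {x : Euc N} (hf : ContDiffAt ℝ 2 f x) (e : Euc N) :
    ContDiffAt ℝ 1 (fun y => fderiv ℝ f y e) x :=
  (hf.fderiv_right (m := 1) (by norm_num)).clm_apply contDiffAt_const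

lemma ev_diff {N : ℕ} {f : Euc N → ℝ} {x : Euc N} (hf : ContDiffAt ℝ 2 f x) :
    ∀ᶠ y in nhds x, DifferentiableAt ℝ f y := by
  filter_upwards [hf.eventually (by simp)] with y hy
  exact hy.differentiableAt (by norm_num)

lemma dir2_mul {N : ℕ} {f g : Euc N → ℝ} {x : Euc N} (hf : ContDiffAt ℝ 2 f x)
    (hg : ContDiffAt ℝ 2 g x) (e : Euc N) :
    fderiv ℝ (fun y => fderiv ℝ (fun z => f z * g z) y e) x e =
      f x * fderiv ℝ (fun y => fderiv ℝ g y e) x e + 2 * (fderiv ℝ f x e * fderiv ℝ g x e)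
      + g x * fderiv ℝ (fun y => fderiv ℝ f y e) x e := by
  have h : (fun y => fderiv ℝ (fun z => f z * g z) y e) =ᶠ[nhds x]
      fun y => f y * fderiv ℝ g y e + g y * fderiv ℝ f y e := by
    filter_upwards [ev_diff hf, ev_diff hg] with y h1 h2
    rw [fderiv_fun_mul h1 h2]
    simp
  rw [h.fderiv_eq]
  have a1 := ((hf.differentiableAt (by norm_num)).hasFDerivAt)
  have a2 := ((hg.differentiableAt (by norm_num)).hasFDerivAt)
  have b1 := (((dir_contDiffAt hf e).differentiableAt (by norm_num)).hasFDerivAt)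
  have b2 := (((dir_contDiffAt hg e).differentiableAt (by norm_num)).hasFDerivAt)
  rw [((a1.fun_mul b2).fun_add (a2.fun_mul b1)).fderiv]
  simp
  ring

lemma lap_mul {N : ℕ} {f g : Euc N → ℝ} {x : Euc N} (hf : ContDiffAt ℝ 2 f x)
    (hg : ContDiffAt ℝ 2 g x) :
    lap N (fun z => f z * g z) x = f x * lap N g x + 2 * (∑ i : Fin N,
      fderiv ℝ f x (EuclideanSpace.single i 1) * fderiv ℝ g x (EuclideanSpace.single i 1))
      + g x * lap N f x := by
  rw [lap_eq_sum (hf.mul hg), lap_eq_sum hf, lap_eq_sum hg, Finset.mul_sum, Finset.mul_sum,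
    Finset.mul_sum, ← Finset.sum_add_distrib, ← Finset.sum_add_distrib]
  exact Finset.sum_congr rfl fun i _ => dir2_mul hf hg _

lemma integral_dir_zero {N : ℕ} {f : Euc N → ℝ} (hf : ContDiff ℝ 1 f) (hc : HasCompactSupport f)
    (e : Euc N) : Integrable (fun x => fderiv ℝ f x e) ∧ ∫ x, fderiv ℝ f x e = 0 := by
  have hi : Integrable (fun x => fderiv ℝ f x e) := by
    apply Continuous.integrable_of_hasCompactSupport
    · exact (hf.continuous_fderiv (by norm_num)).clm_apply continuous_const
    · exact hc.fderiv_apply (𝕜 := ℝ) e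
  refine ⟨hi, ?_⟩
  have := integral_mul_fderiv_eq_neg_fderiv_mul_of_integrable (μ := (volume : Measure (Euc N)))
    (f := fun _ => (1:ℝ)) (g := f) (v := e)
    (by simp) (by simpa using hi)
    (by simpa using hf.continuous.integrable_of_hasCompactSupport hc)
    (fun x _ => differentiableAt_const _)
    (fun x _ => (hf.differentiable (by norm_num)) x)
  simpa using this

/-- Extension by zero. -/
lemma ext_zero {N : ℕ} {A K : Set (Euc N)} (hA : IsOpen A) (hK : IsCompact K) (hKA : K ⊆ A)
    {n : WithTop ℕ∞} {f : Euc N → ℝ} (hf : ContDiffOn ℝ n f A) (h0 : ∀ x ∈ A, x ∉ K → f x = 0) :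
    ContDiff ℝ n (A.indicator f) ∧ HasCompactSupport (A.indicator f) := by
  have hz : ∀ x, x ∉ K → A.indicator f x = 0 := by
    intro x hx
    by_cases hxA : x ∈ A
    · rw [Set.indicator_of_mem hxA, h0 x hxA hx]
    · exact Set.indicator_of_notMem hxA _
  refine ⟨?_, HasCompactSupport.intro hK hz⟩
  rw [contDiff_iff_contDiffAt]
  intro x
  by_cases hx : x ∈ K
  · have hxA := hA.mem_nhds (hKA hx)
    refine (hf.contDiffAt hxA).congr_of_eventuallyEq ?_
    filter_upwards [hxA] with y hy
    exact Set.indicator_of_mem hy _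
  · refine (contDiffAt_const (c := (0:ℝ))).congr_of_eventuallyEq ?_
    filter_upwards [hK.isClosed.isOpen_compl.mem_nhds hx] with y hy
    exact hz y hy

lemma hasDerivAt_pos_sq (t : ℝ) : HasDerivAt (fun t : ℝ => (max t 0) ^ 2) (2 * max t 0) t := by
  rcases lt_trichotomy t 0 with h | h | h
  · rw [max_eq_right h.le]
    refine ((hasDerivAt_const t (0:ℝ)).congr_of_eventuallyEq ?_).congr_deriv (by simp)
    filter_upwards [gt_mem_nhds h] with s hs
    simp [max_eq_right hs.le]
  · subst h
    rw [hasDerivAt_iff_isLittleO_nhds_zero]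
    simp only [zero_add, max_self]
    refine Asymptotics.IsBigO.trans_isLittleO (g := fun h : ℝ => h ^ 2) ?_ ?_
    · refine Asymptotics.IsBigO.of_bound 1 (Filter.Eventually.of_forall fun h => ?_)
      simp only [Real.norm_eq_abs]
      rcases le_total h 0 with hh | hh
      · simp [max_eq_right hh]; positivity
      · simp [max_eq_left hh]
    · exact Asymptotics.isLittleO_pow_id (by norm_num)
  · rw [max_eq_left h.le]
    have := (hasDerivAt_pow 2 t)
    refine (this.congr_of_eventuallyEq ?_).congr_deriv (by simp)
    filter_upwards [lt_mem_nhds h] with s hs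
    simp [max_eq_left hs.le]

lemma contDiff_pos_sq : ContDiff ℝ 1 (fun t : ℝ => (max t 0) ^ 2) := by
  rw [contDiff_one_iff_deriv]
  refine ⟨fun t => (hasDerivAt_pos_sq t).differentiableAt, ?_⟩
  have : deriv (fun t : ℝ => (max t 0) ^ 2) = fun t => 2 * max t 0 :=
    funext fun t => (hasDerivAt_pos_sq t).deriv
  rw [this]
  fun_prop

/-- The truncation. -/
def trunc (δ t : ℝ) : ℝ := (max (t - δ) 0) ^ 2 / t

lemma trunc_deriv {δ t : ℝ} (hδ : 0 < δ) (ht : 0 < t) :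
    ∃ b, 0 ≤ b ∧ b ≤ 1 ∧ HasDerivAt (trunc δ) b t := by
  have h1 := (hasDerivAt_pos_sq (t - δ)).comp t ((hasDerivAt_id t).sub_const δ)
  have h2 := h1.div (hasDerivAt_id t) ht.ne'
  refine ⟨_, ?_, ?_, h2⟩
  all_goals
    simp only [Function.comp, id]
    have hp : 0 ≤ max (t - δ) 0 := le_max_right _ _
    have hq : max (t - δ) 0 ≤ t := max_le (by linarith) ht.le
  · apply div_nonneg _ (by positivity)
    nlinarith
  · rw [div_le_one (by positivity)]
    nlinarith [sq_nonneg (t - max (t - δ) 0)]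

lemma trunc_nonneg {δ t : ℝ} (ht : 0 < t) : 0 ≤ trunc δ t := by unfold trunc; positivity

lemma trunc_le {δ t : ℝ} (hδ : 0 < δ) (ht : 0 < t) : trunc δ t ≤ t := by
  unfold trunc
  have hp : 0 ≤ max (t - δ) 0 := le_max_right _ _
  have hq : max (t - δ) 0 ≤ t := max_le (by linarith) ht.le
  rw [div_le_iff₀ ht]
  nlinarith

lemma trunc_zero {δ t : ℝ} (h : t < δ) : trunc δ t = 0 := by
  unfold trunc
  rw [max_eq_right (by linarith)]
  simp

lemma trunc_contDiffOn {N : ℕ} {A : Set (Euc N)} {w : Euc N → ℝ} (hw : ContDiffOn ℝ 2 w A)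
    (hpos : ∀ x ∈ A, 0 < w x) (δ : ℝ) : ContDiffOn ℝ 1 (fun x => trunc δ (w x)) A := by
  have hw1 : ContDiffOn ℝ 1 w A := hw.of_le (by norm_num)
  unfold trunc
  exact (contDiff_pos_sq.comp_contDiffOn (hw1.sub contDiffOn_const)).div hw1
    (fun x hx => (hpos x hx).ne')

/-- Truncated Picone inequality. -/
lemma picone {N : ℕ} {A : Set (Euc N)} (hA : IsOpen A) {u w V : Euc N → ℝ} {μ μ' δ : ℝ}
    (hδ : 0 < δ) (hu : ContDiffOn ℝ 2 u A) (hw : ContDiffOn ℝ 2 w A)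
    (hup : ∀ x ∈ A, 0 < u x) (hwp : ∀ x ∈ A, 0 < w x) (hV : ContinuousOn V A)
    (hK : IsCompact {x | x ∈ A ∧ δ ≤ w x})
    (hlu : ∀ x ∈ A, μ * V x * u x ≤ -lap N u x)
    (hlw : ∀ x ∈ A, -lap N w x = μ' * V x * w x) :
    ∫ x in A, V x * (μ * trunc δ (w x) ^ 2 - μ' * (trunc δ (w x) * w x)) ≤ 0 := by
  set K := {x | x ∈ A ∧ δ ≤ w x} with hKdef
  have hKA : K ⊆ A := fun x hx => hx.1
  have hβ := trunc_contDiffOn hw hwp δ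
  have hβ0 : ∀ x ∈ A, x ∉ K → trunc δ (w x) = 0 := by
    intro x hx hxK
    apply trunc_zero
    by_contra h
    exact hxK ⟨hx, not_lt.mp h⟩
  have cu : ∀ x ∈ A, ContDiffAt ℝ 2 u x := fun x hx => hu.contDiffAt (hA.mem_nhds hx)
  have cw : ∀ x ∈ A, ContDiffAt ℝ 2 w x := fun x hx => hw.contDiffAt (hA.mem_nhds hx)
  set X : Fin N → Euc N → ℝ := fun i x =>
    trunc δ (w x) ^ 2 * (fderiv ℝ u x (EuclideanSpace.single i 1) * (u x)⁻¹)
      - trunc δ (w x) * fderiv ℝ w x (EuclideanSpace.single i 1) with hX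
  have hXc : ∀ i, ContDiffOn ℝ 1 (X i) A := by
    intro i
    have h1 : ContDiffOn ℝ 1 (fun y => fderiv ℝ u y (EuclideanSpace.single i 1)) A :=
      fun x hx => (dir_contDiffAt (cu x hx) _).contDiffWithinAt
    have h2 : ContDiffOn ℝ 1 (fun y => fderiv ℝ w y (EuclideanSpace.single i 1)) A :=
      fun x hx => (dir_contDiffAt (cw x hx) _).contDiffWithinAt
    exact ((hβ.pow 2).mul (h1.mul ((hu.of_le (by norm_num)).inv (fun x hx => (hup x hx).ne')))).sub
      (hβ.mul h2)
  have hX0 : ∀ i, ∀ x ∈ A, x ∉ K → X i x = 0 := by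
    intro i x hx hxK
    simp [hX, hβ0 x hx hxK]
  have hE := fun i => ext_zero hA hK hKA (hXc i) (hX0 i)
  have hI := fun i => integral_dir_zero (hE i).1 (hE i).2 (EuclideanSpace.single i 1)
  set R : Euc N → ℝ := fun x => V x * (μ * trunc δ (w x) ^ 2 - μ' * (trunc δ (w x) * w x)) with hR
  have hRc : ContinuousOn R A :=
    hV.mul ((continuousOn_const.mul (hβ.continuousOn.pow 2)).sub
      (continuousOn_const.mul (hβ.continuousOn.mul hw.continuousOn)))
  have hRE := ext_zero hA hK hKA (contDiffOn_zero.mpr hRc)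
    (fun x hx hxK => by simp [hR, hβ0 x hx hxK])
  have hRI : Integrable (A.indicator R) :=
    (contDiff_zero.mp hRE.1).integrable_of_hasCompactSupport hRE.2
  rw [← integral_indicator hA.measurableSet]
  have hdiv : ∫ x, ∑ i, fderiv ℝ (A.indicator (X i)) x (EuclideanSpace.single i 1) = 0 := by
    rw [integral_finsetSum _ (fun i _ => (hI i).1)]
    exact Finset.sum_eq_zero fun i _ => (hI i).2
  have key : ∀ x, A.indicator R x ≤
      -∑ i, fderiv ℝ (A.indicator (X i)) x (EuclideanSpace.single i 1) := by
    intro x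
    by_cases hx : x ∈ A
    · rw [Set.indicator_of_mem hx]
      obtain ⟨b, hb0, hb1, hb⟩ := trunc_deriv hδ (hwp x hx)
      have hux := hup x hx
      have hwx := hwp x hx
      have a1 := ((cu x hx).differentiableAt (by norm_num)).hasFDerivAt
      have a2 := ((cw x hx).differentiableAt (by norm_num)).hasFDerivAt
      have a4 := (hasDerivAt_inv hux.ne').comp_hasFDerivAt x a1
      have a3 := hb.comp_hasFDerivAt x a2
      have e1 : ∀ i, fderiv ℝ (A.indicator (X i)) x (EuclideanSpace.single i 1) ≤
          trunc δ (w x) ^ 2 / u x * fderiv ℝ (fun y => fderiv ℝ u y (EuclideanSpace.single i 1)) x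
            (EuclideanSpace.single i 1)
          - trunc δ (w x) * fderiv ℝ (fun y => fderiv ℝ w y (EuclideanSpace.single i 1)) x
            (EuclideanSpace.single i 1) := by
        intro i
        have h : A.indicator (X i) =ᶠ[nhds x] X i := by
          filter_upwards [hA.mem_nhds hx] with y hy
          exact Set.indicator_of_mem hy _
        rw [h.fderiv_eq]
        have b1 := ((dir_contDiffAt (cu x hx) (EuclideanSpace.single i 1)).differentiableAt
          (by norm_num)).hasFDerivAt
        have b2 := ((dir_contDiffAt (cw x hx) (EuclideanSpace.single i 1)).differentiableAt
          (by norm_num)).hasFDerivAt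
        have hd : HasFDerivAt (X i) _ x :=
          ((a3.pow 2).fun_mul (b1.fun_mul a4)).fun_sub (a3.fun_mul b2)
        rw [hd.fderiv]
        simp only [Function.comp, _root_.sub_apply, _root_.add_apply,
          _root_.smul_apply, smul_eq_mul]
        set c := trunc δ (w x)
        set D := fderiv ℝ u x (EuclideanSpace.single i 1)
        set W := fderiv ℝ w x (EuclideanSpace.single i 1)
        set DD := fderiv ℝ (fun y => fderiv ℝ u y (EuclideanSpace.single i 1)) x
            (EuclideanSpace.single i 1)
        set WW := fderiv ℝ (fun y => fderiv ℝ w y (EuclideanSpace.single i 1)) x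
            (EuclideanSpace.single i 1)
        have hq : 0 ≤ b * (c * (D / u x) - W) ^ 2 + (1 - b) * (c * (D / u x)) ^ 2 := by
          have : 0 ≤ 1 - b := by linarith
          positivity
        refine le_of_sub_nonneg (hq.trans_eq ?_)
        simp
        field_simp
        ring
      have e2 := Finset.sum_le_sum (s := Finset.univ) fun i _ => e1 i
      rw [Finset.sum_sub_distrib, ← Finset.mul_sum, ← Finset.mul_sum, ← lap_eq_sum (cu x hx),
        ← lap_eq_sum (cw x hx)] at e2
      have e3 := hlu x hx
      have e4 := hlw x hx
      have e5 := mul_le_mul_of_nonneg_left e3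
        (show 0 ≤ trunc δ (w x) ^ 2 / u x by positivity)
      have e6 : trunc δ (w x) ^ 2 / u x * (μ * V x * u x) = μ * V x * trunc δ (w x) ^ 2 := by
        field_simp
      have e7 : trunc δ (w x) * -lap N w x = trunc δ (w x) * (μ' * V x * w x) := by rw [e4]
      simp only [hR]
      linarith
    · rw [Set.indicator_of_notMem hx]
      have : ∀ i, fderiv ℝ (A.indicator (X i)) x = 0 := by
        intro i
        have h : A.indicator (X i) =ᶠ[nhds x] fun _ => 0 := by
          filter_upwards [hK.isClosed.isOpen_compl.mem_nhds (fun h => hx (hKA h))] with y hy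
          by_cases hyA : y ∈ A
          · rw [Set.indicator_of_mem hyA]; exact hX0 i y hyA hy
          · exact Set.indicator_of_notMem hyA _
        rw [h.fderiv_eq]; simp
      simp [this]
  calc ∫ x, A.indicator R x ≤ ∫ x, -∑ i, fderiv ℝ (A.indicator (X i)) x
        (EuclideanSpace.single i 1) :=
        integral_mono hRI (integrable_finsetSum _ fun i _ => (hI i).1).neg key
    _ = 0 := by rw [integral_neg, hdiv, neg_zero]

lemma trunc_tendsto {t : ℝ} (ht : 0 < t) :
    Filter.Tendsto (fun n : ℕ => trunc (1 / ((n:ℝ) + 1)) t) Filter.atTop (nhds t) := by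
  have h := tendsto_one_div_add_atTop_nhds_zero_nat (𝕜 := ℝ)
  have hc : Continuous fun δ : ℝ => trunc δ t := by unfold trunc; fun_prop
  have := (hc.tendsto 0).comp h
  have e : trunc 0 t = t := by
    unfold trunc; rw [sub_zero, max_eq_left ht.le]; field_simp
  rwa [e] at this

/-- Passage to the limit: no positive supersolution. -/
lemma no_super {N : ℕ} {A : Set (Euc N)} (hA : IsOpen A) (hne : A.Nonempty)
    (hbd : Bornology.IsBounded A) {u w V : Euc N → ℝ} {μ μ' C : ℝ} (hμ : μ' < μ)
    (hu : ContDiffOn ℝ 2 u A) (hw : ContDiffOn ℝ 2 w A)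
    (hup : ∀ x ∈ A, 0 < u x) (hwp : ∀ x ∈ A, 0 < w x) (hV : ContinuousOn V A)
    (hVp : ∀ x ∈ A, 0 < V x) (hVC : ∀ x ∈ A, V x * (w x * w x) ≤ C)
    (hK : ∀ δ > 0, IsCompact {x | x ∈ A ∧ δ ≤ w x})
    (hlu : ∀ x ∈ A, μ * V x * u x ≤ -lap N u x)
    (hlw : ∀ x ∈ A, -lap N w x = μ' * V x * w x) : False := by
  have hfin : volume A < ⊤ := hbd.measure_lt_top
  have hmA := hA.measurableSet
  have hI0 : IntegrableOn (fun x => V x * (w x * w x)) A := by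
    refine IntegrableOn.of_bound hfin ?_ C ?_
    · exact (hV.mul (hw.continuousOn.mul hw.continuousOn)).aestronglyMeasurable hmA
    · filter_upwards [ae_restrict_mem hmA] with x hx
      have := hVp x hx
      have := hwp x hx
      rw [Real.norm_of_nonneg (by positivity)]
      exact hVC x hx
  have hlim : Filter.Tendsto (fun n : ℕ => ∫ x in A, V x * (μ * trunc (1 / ((n:ℝ) + 1)) (w x) ^ 2
      - μ' * (trunc (1 / ((n:ℝ) + 1)) (w x) * w x))) Filter.atTop
      (nhds (∫ x in A, V x * (μ * w x ^ 2 - μ' * (w x * w x)))) := by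
    refine tendsto_integral_of_dominated_convergence
      (fun x => (|μ| + |μ'|) * (V x * (w x * w x))) ?_ (hI0.const_mul _) ?_ ?_
    · intro n
      have hβ := (trunc_contDiffOn hw hwp (1 / ((n:ℝ) + 1))).continuousOn
      exact (hV.mul ((continuousOn_const.mul (hβ.pow 2)).sub
        (continuousOn_const.mul (hβ.mul hw.continuousOn)))).aestronglyMeasurable hmA
    · intro n
      filter_upwards [ae_restrict_mem hmA] with x hx
      have h1 := hVp x hx
      have h2 := hwp x hx
      have hδ : (0:ℝ) < 1 / ((n:ℝ) + 1) := by positivity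
      have h3 := trunc_nonneg (δ := 1 / ((n:ℝ) + 1)) h2
      have h4 := trunc_le hδ h2
      set c := trunc (1 / ((n:ℝ) + 1)) (w x)
      rw [Real.norm_eq_abs, abs_mul, abs_of_pos h1]
      have h5 : |μ * c ^ 2 - μ' * (c * w x)| ≤ |μ| * (w x * w x) + |μ'| * (w x * w x) := by
        refine (abs_sub _ _).trans ?_
        rw [abs_mul, abs_mul, abs_of_nonneg (show 0 ≤ c ^ 2 by positivity),
          abs_of_nonneg (show 0 ≤ c * w x by positivity)]
        gcongr
        nlinarith
      calc V x * |μ * c ^ 2 - μ' * (c * w x)|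
          ≤ V x * (|μ| * (w x * w x) + |μ'| * (w x * w x)) := by gcongr
        _ = _ := by ring
    · filter_upwards [ae_restrict_mem hmA] with x hx
      have h := trunc_tendsto (hwp x hx)
      exact (((h.pow 2).const_mul μ).sub ((h.mul_const (w x)).const_mul μ')).const_mul (V x)
  have hle := le_of_tendsto' hlim (fun n =>
    picone hA (show (0:ℝ) < 1 / ((n:ℝ) + 1) by positivity) hu hw hup hwp hV
      (hK _ (by positivity)) hlu hlw)
  have heq : ∫ x in A, V x * (μ * w x ^ 2 - μ' * (w x * w x)) =
      (μ - μ') * ∫ x in A, V x * (w x * w x) := by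
    rw [← integral_const_mul]
    congr 1
    ext x
    ring
  have hpos : 0 < ∫ x in A, V x * (w x * w x) := by
    rw [setIntegral_pos_iff_support_of_nonneg_ae]
    · have : (Function.support fun x => V x * (w x * w x)) ∩ A = A := by
        apply Set.inter_eq_right.mpr
        intro x hx
        have := hVp x hx
        have := hwp x hx
        exact (show 0 < V x * (w x * w x) by positivity).ne'
      rw [this]
      exact hA.measure_pos _ hne
    · filter_upwards [ae_restrict_mem hmA] with x hx
      have := hVp x hx
      have := hwp x hx
      exact (show 0 ≤ V x * (w x * w x) by positivity)
    · exact hI0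
  rw [heq] at hle
  nlinarith

lemma radial_fderiv {N : ℕ} {k k1 : ℝ → ℝ} (h1 : ∀ s > 0, HasDerivAt k (k1 s) s)
    {x : Euc N} (hx : x ≠ 0) (e : Euc N) :
    fderiv ℝ (fun y : Euc N => k (‖y‖ ^ 2)) x e = k1 (‖x‖ ^ 2) * (2 * inner ℝ x e) := by
  have hs : 0 < ‖x‖ ^ 2 := by positivity
  have := (h1 _ hs).comp_hasFDerivAt x (hasStrictFDerivAt_norm_sq x).hasFDerivAt
  rw [show (fun y : Euc N => k (‖y‖ ^ 2)) = k ∘ fun y : Euc N => ‖y‖ ^ 2 from rfl, this.fderiv]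
  simp

lemma radial_lap {N : ℕ} {k k1 k2 : ℝ → ℝ} (h1 : ∀ s > 0, HasDerivAt k (k1 s) s)
    (h2 : ∀ s > 0, HasDerivAt k1 (k2 s) s) {x : Euc N} (hx : x ≠ 0)
    (hc : ContDiffAt ℝ 2 (fun y : Euc N => k (‖y‖ ^ 2)) x) :
    lap N (fun y : Euc N => k (‖y‖ ^ 2)) x =
      2 * N * k1 (‖x‖ ^ 2) + 4 * ‖x‖ ^ 2 * k2 (‖x‖ ^ 2) := by
  have hs : 0 < ‖x‖ ^ 2 := by positivity
  rw [lap_eq_sum hc]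
  have : ∀ i : Fin N, fderiv ℝ (fun y => fderiv ℝ (fun y : Euc N => k (‖y‖ ^ 2)) y
      (EuclideanSpace.single i 1)) x (EuclideanSpace.single i 1) =
      2 * k1 (‖x‖ ^ 2) + 4 * k2 (‖x‖ ^ 2) * (x i) ^ 2 := by
    intro i
    have h : (fun y => fderiv ℝ (fun y : Euc N => k (‖y‖ ^ 2)) y
      (EuclideanSpace.single i 1)) =ᶠ[nhds x] fun y => k1 (‖y‖ ^ 2) * (2 * y i) := by
      filter_upwards [isOpen_ne.mem_nhds hx] with y hy
      rw [radial_fderiv h1 hy]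
      simp [EuclideanSpace.inner_single_right]
    rw [h.fderiv_eq]
    have a1 := (h2 _ hs).comp_hasFDerivAt x (hasStrictFDerivAt_norm_sq x).hasFDerivAt
    have a2 : HasFDerivAt (fun y : Euc N => y i)
      (EuclideanSpace.proj i : Euc N →L[ℝ] ℝ) x :=
      (EuclideanSpace.proj i : Euc N →L[ℝ] ℝ).hasFDerivAt
    have a3 := a1.fun_mul (a2.const_mul 2)
    simp only [Function.comp] at a3
    rw [a3.fderiv]
    simp [EuclideanSpace.inner_single_right]
    ring
  rw [Finset.sum_congr rfl fun i _ => this i, Finset.sum_add_distrib, ← Finset.mul_sum,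
    ← Finset.mul_sum, ← EuclideanSpace.real_norm_sq_eq]
  simp
  ring

lemma homog_fderiv {N : ℕ} {φ : Euc N → ℝ} {x : Euc N}
    (hd : DifferentiableAt ℝ (fun y : Euc N => φ (‖y‖⁻¹ • y)) x) :
    fderiv ℝ (fun y : Euc N => φ (‖y‖⁻¹ • y)) x x = 0 := by
  have h := (hd.hasFDerivAt.hasLineDerivAt x)
  have h' : HasDerivAt (fun t : ℝ => φ (‖x + t • x‖⁻¹ • (x + t • x))) 0 0 := by
    refine (hasDerivAt_const (0:ℝ) (φ (‖x‖⁻¹ • x))).congr_of_eventuallyEq ?_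
    filter_upwards [lt_mem_nhds (show (-1:ℝ) < 0 by norm_num)] with t ht
    have ht' : 0 < 1 + t := by linarith
    have e : x + t • x = (1 + t) • x := by rw [add_smul, one_smul]
    rw [e, norm_smul, Real.norm_of_nonneg ht'.le, smul_smul, mul_inv, mul_comm (1 + t)⁻¹,
      mul_assoc, inv_mul_cancel₀ ht'.ne', mul_one]
  exact HasDerivAt.unique h h'

lemma radial_homog_orth {N : ℕ} {k k1 : ℝ → ℝ} (h1 : ∀ s > 0, HasDerivAt k (k1 s) s)
    {φ : Euc N → ℝ} {x : Euc N} (hx : x ≠ 0)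
    (hd : DifferentiableAt ℝ (fun y : Euc N => φ (‖y‖⁻¹ • y)) x) :
    ∑ i : Fin N, fderiv ℝ (fun y : Euc N => k (‖y‖ ^ 2)) x (EuclideanSpace.single i 1) *
      fderiv ℝ (fun y : Euc N => φ (‖y‖⁻¹ • y)) x (EuclideanSpace.single i 1) = 0 := by
  have h := homog_fderiv hd
  have hxs : x = ∑ i : Fin N, x i • EuclideanSpace.single i (1:ℝ) := by
    ext j
    simp [Finset.sum_apply, Pi.single_apply]
  set L := fderiv ℝ (fun y : Euc N => φ (‖y‖⁻¹ • y)) x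
  have h2 : ∑ i : Fin N, x i * L (EuclideanSpace.single i (1:ℝ)) = 0 := by
    rw [← h]
    conv_rhs => rw [hxs]
    rw [map_sum]
    simp
  calc _ = ∑ i : Fin N, (2 * k1 (‖x‖ ^ 2)) * (x i * L (EuclideanSpace.single i (1:ℝ))) := by
        refine Finset.sum_congr rfl fun i _ => ?_
        rw [radial_fderiv h1 hx]
        simp [EuclideanSpace.inner_single_right]
        ring
    _ = 0 := by rw [← Finset.mul_sum, h2, mul_zero]

/-- The oscillating radial profile as a function of `s = ‖x‖²`. -/
def prof (a κ τ s : ℝ) : ℝ := Real.exp (-a * Real.log s) * Real.sin (κ * (Real.log s - τ))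

/-- First derivative of the profile. -/
def prof1 (a κ τ s : ℝ) : ℝ := Real.exp (-a * Real.log s) *
  (κ * Real.cos (κ * (Real.log s - τ)) - a * Real.sin (κ * (Real.log s - τ))) / s

/-- Second derivative of the profile. -/
def prof2 (a κ τ s : ℝ) : ℝ := Real.exp (-a * Real.log s) *
  ((a ^ 2 - κ ^ 2) * Real.sin (κ * (Real.log s - τ)) - 2 * a * κ * Real.cos (κ * (Real.log s - τ))
  - (κ * Real.cos (κ * (Real.log s - τ)) - a * Real.sin (κ * (Real.log s - τ)))) / s ^ 2

lemma prof_d1 (a κ τ : ℝ) : ∀ s > 0, HasDerivAt (prof a κ τ) (prof1 a κ τ s) s := by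
  intro s hs
  have hl := Real.hasDerivAt_log hs.ne'
  have h1 := (hl.const_mul (-a)).exp
  have h2 := ((hl.sub_const τ).const_mul κ).sin
  refine (h1.mul h2).congr_deriv ?_
  unfold prof1
  field_simp
  ring

lemma prof_d2 (a κ τ : ℝ) : ∀ s > 0, HasDerivAt (prof1 a κ τ) (prof2 a κ τ s) s := by
  intro s hs
  have hl := Real.hasDerivAt_log hs.ne'
  have h1 := (hl.const_mul (-a)).exp
  have h2 := ((hl.sub_const τ).const_mul κ).sin
  have h3 := ((hl.sub_const τ).const_mul κ).cos
  refine ((h1.mul ((h3.const_mul κ).sub (h2.const_mul a))).div (hasDerivAt_id s) hs.ne').congr_deriv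
    ?_
  unfold prof2
  simp
  field_simp
  ring

lemma prof_contDiffAt {N : ℕ} (a κ τ : ℝ) {x : Euc N} (hx : x ≠ 0) :
    ContDiffAt ℝ 2 (fun y : Euc N => prof a κ τ (‖y‖ ^ 2)) x := by
  have hs : ‖x‖ ^ 2 ≠ 0 := by positivity
  have h0 : ContDiffAt ℝ 2 (fun y : Euc N => ‖y‖ ^ 2) x := (contDiff_norm_sq ℝ).contDiffAt
  have hl := h0.log hs
  unfold prof
  exact (contDiffAt_const.mul hl).exp.mul (contDiffAt_const.mul (hl.sub contDiffAt_const)).sin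

lemma prof_lap {N : ℕ} (a κ τ : ℝ) (ha : 4 * a = (N:ℝ) - 2) {x : Euc N} (hx : x ≠ 0) :
    lap N (fun y : Euc N => prof a κ τ (‖y‖ ^ 2)) x =
      -(4 * a ^ 2 + 4 * κ ^ 2) * (‖x‖ ^ 2)⁻¹ * prof a κ τ (‖x‖ ^ 2) := by
  rw [radial_lap (prof_d1 a κ τ) (prof_d2 a κ τ) hx (prof_contDiffAt a κ τ hx)]
  have hs : ‖x‖ ^ 2 ≠ 0 := by positivity
  generalize ‖x‖ ^ 2 = s at hs
  have hN : (N:ℝ) = 4 * a + 2 := by linarith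
  unfold prof prof1 prof2
  rw [hN]
  field_simp
  ring

/-- if `μ > C_{H,Ω}` then `(E)` has no positive solution in `C_Ω^ρ`. -/
theorem no_solution_of_mu_gt_hardy
    (N : ℕ) (hN : 2 ≤ N) (Ω : Set (Euc N)) (hΩ : IsConeDomain N Ω)
    (lam1 : ℝ) (φ : Euc N → ℝ) (hphi : DirichletEigenpair N Ω lam1 φ)
    (α p q ρ μ : ℝ) (hα : 0 ≤ α) (hαN : α < N) (hp : 0 < p) (hq : 0 < q) (hρ : 0 < ρ)
    (hμ : CHconst N lam1 < μ) :
    ¬ ∃ u : Euc N → ℝ, IsPosSolE N ρ μ α p q Ω u := by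
  rintro ⟨u, hu2, -, hup, -, hE⟩
  obtain ⟨hΩs, hΩc, hΩo⟩ := hΩ
  obtain ⟨a, ha⟩ : ∃ a : ℝ, 4 * a = (N:ℝ) - 2 := ⟨((N:ℝ) - 2) / 4, by ring⟩
  obtain ⟨μ', hμ1, hμ2⟩ := exists_between hμ
  obtain ⟨κ, hκ, hκ2⟩ : ∃ κ : ℝ, 0 < κ ∧ 4 * κ ^ 2 = μ' - CHconst N lam1 := by
    have h : 0 < μ' - CHconst N lam1 := by linarith
    refine ⟨Real.sqrt (μ' - CHconst N lam1) / 2, by positivity, ?_⟩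
    rw [div_pow, Real.sq_sqrt h.le]
    ring
  have hμ' : μ' = lam1 + (4 * a ^ 2 + 4 * κ ^ 2) := by
    rw [hκ2]
    unfold CHconst
    rw [← ha]
    ring
  set τ := Real.log (ρ ^ 2) with hτ
  set S := Real.exp (τ + π / κ) with hS
  have hρS : ρ ^ 2 < S := by
    rw [← Real.log_lt_iff_lt_exp (by positivity)]
    have : 0 < π / κ := by positivity
    linarith
  set w : Euc N → ℝ := fun x => prof a κ τ (‖x‖ ^ 2) * φ (‖x‖⁻¹ • x) with hw
  set A : Set (Euc N) := {x | (ρ ^ 2 < ‖x‖ ^ 2 ∧ ‖x‖ ^ 2 < S) ∧ ‖x‖⁻¹ • x ∈ Ω} with hAdef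
  set B : Set (Euc N) := {x | ρ ^ 2 ≤ ‖x‖ ^ 2 ∧ ‖x‖ ^ 2 ≤ S} with hBdef
  set D : Set (Euc N) := B ∩ (fun x => ‖x‖⁻¹ • x) ⁻¹' closure Ω with hDdef
  have hB0 : ∀ x ∈ B, x ≠ 0 := by
    rintro x hx rfl
    have := hx.1
    simp at this
    nlinarith
  have hnc : ∀ x : Euc N, x ≠ 0 → ContinuousAt (fun x : Euc N => ‖x‖⁻¹ • x) x := fun x hx =>
    (continuousAt_id.norm.inv₀ (by simpa using hx)).smul continuousAt_id
  have hBcl : IsClosed B := by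
    have hcn : Continuous fun y : Euc N => ‖y‖ ^ 2 := by fun_prop
    exact (isClosed_le continuous_const hcn).inter (isClosed_le hcn continuous_const)
  have hDcl : IsClosed D :=
    ContinuousOn.preimage_isClosed_of_isClosed (fun x hx => (hnc x (hB0 x hx)).continuousWithinAt)
      hBcl isClosed_closure
  have hDc : IsCompact D := by
    refine Metric.isCompact_of_isClosed_isBounded hDcl ?_
    refine (Metric.isBounded_closedBall (x := (0 : Euc N)) (r := Real.sqrt S)).subset ?_
    intro x hx
    rw [mem_closedBall_zero_iff]
    exact Real.le_sqrt_of_sq_le hx.1.2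
  have hAD : A ⊆ D := fun x hx => ⟨⟨hx.1.1.le, hx.1.2.le⟩, subset_closure hx.2⟩
  have hA0 : ∀ x ∈ A, x ≠ 0 := fun x hx => hB0 x (hAD hx).1
  have hAcone : A ⊆ cone N Ω := fun x hx => ⟨hA0 x hx, hx.2⟩
  have hAgt : A ⊆ coneGT N ρ Ω := fun x hx =>
    ⟨lt_of_pow_lt_pow_left₀ 2 (norm_nonneg x) hx.1.1, hx.2⟩
  have hA : IsOpen A := by
    obtain ⟨W, hW, hWΩ⟩ := isOpen_induced_iff.mp hΩo
    have hΩW : ∀ y : Euc N, ‖y‖ = 1 → (y ∈ Ω ↔ y ∈ W) := by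
      intro y hy
      have := Set.ext_iff.mp hWΩ ⟨y, by simpa using hy⟩
      simpa using this.symm
    rw [isOpen_iff_mem_nhds]
    intro x hx
    have hx0 := hA0 x hx
    have hone : ∀ y : Euc N, y ≠ 0 → ‖‖y‖⁻¹ • y‖ = 1 := fun y hy => by
      rw [norm_smul, norm_inv, norm_norm, inv_mul_cancel₀ (by simpa using hy)]
    have hWx : ‖x‖⁻¹ • x ∈ W := (hΩW _ (hone x hx0)).1 hx.2
    have hcn : Continuous fun y : Euc N => ‖y‖ ^ 2 := by fun_prop
    filter_upwards [isOpen_ne.mem_nhds hx0, (hnc x hx0).preimage_mem_nhds (hW.mem_nhds hWx),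
      hcn.continuousAt.preimage_mem_nhds (Ioo_mem_nhds hx.1.1 hx.1.2)] with y hy1 hy2 hy3
    exact ⟨hy3, (hΩW _ (hone y hy1)).2 hy2⟩
  have hne : A.Nonempty := by
    obtain ⟨ω, hω⟩ := hΩc.nonempty
    obtain ⟨s, hs1, hs2⟩ := exists_between hρS
    have hs0 : 0 < s := lt_trans (by positivity) hs1
    have hω1 : ‖ω‖ = 1 := by simpa using hΩs hω
    have hn : ‖Real.sqrt s • ω‖ = Real.sqrt s := by
      rw [norm_smul, hω1, mul_one, Real.norm_of_nonneg (Real.sqrt_nonneg s)]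
    refine ⟨Real.sqrt s • ω, ⟨?_, ?_⟩, ?_⟩
    · rw [hn, Real.sq_sqrt hs0.le]; exact hs1
    · rw [hn, Real.sq_sqrt hs0.le]; exact hs2
    · rw [hn, smul_smul, inv_mul_cancel₀ (Real.sqrt_pos.mpr hs0).ne', one_smul]
      exact hω
  have hwD : ContinuousOn w D := by
    refine ContinuousOn.mul ?_ ?_
    · intro x hx
      exact (prof_contDiffAt a κ τ (hB0 x hx.1)).continuousAt.continuousWithinAt
    · exact hphi.contOn.comp (fun x hx => (hnc x (hB0 x hx.1)).continuousWithinAt)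
        (fun x hx => hx.2)
  have hprof : ∀ s, ρ ^ 2 < s → s < S → 0 < prof a κ τ s := by
    intro s h1 h2
    have hs0 : 0 < s := lt_trans (by positivity) h1
    have l1 : τ < Real.log s := Real.log_lt_log (by positivity) h1
    have l2 : Real.log s < τ + π / κ := (Real.log_lt_iff_lt_exp hs0).2 h2
    refine mul_pos (Real.exp_pos _) (Real.sin_pos_of_pos_of_lt_pi ?_ ?_)
    · exact mul_pos hκ (by linarith)
    · have : κ * (Real.log s - τ) < κ * (π / κ) := by gcongr; linarith
      rwa [mul_div_cancel₀ _ hκ.ne'] at this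
  have hwp : ∀ x ∈ A, 0 < w x := fun x hx => mul_pos (hprof _ hx.1.1 hx.1.2) (hphi.pos _ hx.2)
  have hK : ∀ δ > 0, IsCompact {x | x ∈ A ∧ δ ≤ w x} := by
    intro δ hδ
    have : {x | x ∈ A ∧ δ ≤ w x} = D ∩ w ⁻¹' Set.Ici δ := by
      ext x
      constructor
      · exact fun h => ⟨hAD h.1, h.2⟩
      · rintro ⟨hx, hxw⟩
        have hxw' : δ ≤ w x := hxw
        have hne0 : w x ≠ 0 := by linarith
        have hp1 : prof a κ τ (‖x‖ ^ 2) ≠ 0 := left_ne_zero_of_mul hne0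
        have hp2 : φ (‖x‖⁻¹ • x) ≠ 0 := right_ne_zero_of_mul hne0
        refine ⟨⟨⟨lt_of_le_of_ne hx.1.1 ?_, lt_of_le_of_ne hx.1.2 ?_⟩, ?_⟩, hxw'⟩
        · intro h
          apply hp1
          rw [← h]
          simp [prof, hτ]
        · intro h
          apply hp1
          rw [h]
          simp [prof, hS, mul_div_cancel₀ _ hκ.ne']
        · by_contra hc
          exact hp2 (hphi.bdryZero _ ⟨hx.2, hc⟩)
    rw [this]
    exact hDc.of_isClosed_subset (hwD.preimage_isClosed_of_isClosed hDcl isClosed_Ici)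
      Set.inter_subset_left
  have hVD : ContinuousOn (fun x : Euc N => ‖x‖ ^ (-(2:ℝ))) D := by
    intro x hx
    exact (continuousAt_id.norm.rpow_const
      (Or.inl (by simpa using hB0 x hx.1))).continuousWithinAt
  obtain ⟨C, hC⟩ := hDc.exists_bound_of_continuousOn (hVD.mul (hwD.mul hwD))
  have hcΦ : ∀ x ∈ A, ContDiffAt ℝ 2 (fun y : Euc N => φ (‖y‖⁻¹ • y)) x := fun x hx =>
    (hphi.smoothExt.mono hAcone).contDiffAt (hA.mem_nhds hx)
  have hV2 : ∀ x : Euc N, ‖x‖ ^ (-(2:ℝ)) = (‖x‖ ^ 2)⁻¹ := fun x => by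
    rw [Real.rpow_neg (norm_nonneg x), Real.rpow_two]
  refine no_super hA hne (hDc.isBounded.subset hAD) (u := u) (w := w)
    (V := fun x => ‖x‖ ^ (-(2:ℝ))) (μ := μ) (μ' := μ') (C := C) hμ2 (hu2.mono hAgt) ?_
    (fun x hx => hup x (hAgt hx)) hwp (hVD.mono hAD) ?_ ?_ hK ?_ ?_
  · intro x hx
    exact ((prof_contDiffAt a κ τ (hA0 x hx)).mul (hcΦ x hx)).contDiffWithinAt
  · intro x hx
    exact Real.rpow_pos_of_pos (norm_pos_iff.mpr (hA0 x hx)) _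
  · intro x hx
    exact (le_abs_self _).trans (hC x (hAD hx))
  · intro x hx
    have h := hE x (hAgt hx)
    have h1 := hup x (hAgt hx)
    have h2 : 0 ≤ (rieszConv N α ρ Ω (fun y => u y ^ p) x).toReal * u x ^ q := by positivity
    linarith
  · intro x hx
    have h1 := lap_mul (prof_contDiffAt a κ τ (hA0 x hx)) (hcΦ x hx)
    rw [radial_homog_orth (prof_d1 a κ τ) (hA0 x hx) ((hcΦ x hx).differentiableAt (by norm_num)),
      prof_lap a κ τ ha (hA0 x hx), hphi.eigen x (hAcone hx), hV2] at h1
    simp only [hw]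
    rw [h1, hV2, hμ']
    ring
end
end

section
/- Assume 0 ≤ α < N, p, q > 0, ρ > 0, and that the Dirichlet eigenpair hypothesis holds for (Ω, λ₁, φ). If μ ≤ C_{H,Ω} and p·|γ_*| ≤ N − α (equivalently, p ≤ (N−α)/|γ_*| when γ_* < 0), then the inequality (E): −Δu − μ|x|^{−2}u ≥ (|x|^{−α} * u^p) u^q has no positive solution in C_Ω^ρ. -/
open MeasureTheory Real Set
open scoped ENNReal NNReal

noncomputable section

open Filter Topology

/-- The `i`-th partial derivative. -/
def pd (N : ℕ) (i : Fin N) (f : Euc N → ℝ) (x : Euc N) : ℝ :=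
  fderiv ℝ f x (EuclideanSpace.single i 1)

lemma pd_congr {N : ℕ} {i : Fin N} {f g : Euc N → ℝ} {x : Euc N} (h : f =ᶠ[𝓝 x] g) :
    pd N i f x = pd N i g x := by
  unfold pd; rw [h.fderiv_eq]

lemma pd_eventuallyEq {N : ℕ} {i : Fin N} {f g : Euc N → ℝ} {x : Euc N} (h : f =ᶠ[𝓝 x] g) :
    pd N i f =ᶠ[𝓝 x] pd N i g := by
  filter_upwards [h.eventuallyEq_nhds] with y hy using pd_congr hy

lemma pd_contDiffAt {N : ℕ} {i : Fin N} {f : Euc N → ℝ} {x : Euc N} {m n : ℕ}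
    (hf : ContDiffAt ℝ n f x) (hmn : m + 1 ≤ n) : ContDiffAt ℝ m (pd N i f) x := by
  have : ContDiffAt ℝ m (fderiv ℝ f) x := hf.fderiv_right (by exact_mod_cast hmn)
  exact this.clm_apply contDiffAt_const

lemma lap_eq {N : ℕ} {f : Euc N → ℝ} {x : Euc N} (hf : ContDiffAt ℝ 2 f x) :
    lap N f x = ∑ i, pd N i (pd N i f) x := by
  unfold lap
  refine Finset.sum_congr rfl fun i _ => ?_
  rw [iteratedFDeriv_two_apply]
  have h1 : DifferentiableAt ℝ (fderiv ℝ f) x :=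
    (hf.fderiv_right (m := 1) (by norm_num)).differentiableAt (by norm_num)
  unfold pd
  rw [fderiv_clm_apply h1 (differentiableAt_const _)]
  simp

lemma lap_congr {N : ℕ} {f g : Euc N → ℝ} {x : Euc N} (h : f =ᶠ[𝓝 x] g) :
    lap N f x = lap N g x := by
  unfold lap
  rw [(h.iteratedFDeriv ℝ 2).eq_of_nhds]

lemma pd_add {N : ℕ} {i : Fin N} {f g : Euc N → ℝ} {x : Euc N}
    (hf : DifferentiableAt ℝ f x) (hg : DifferentiableAt ℝ g x) :
    pd N i (fun y => f y + g y) x = pd N i f x + pd N i g x := by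
  unfold pd
  rw [fderiv_fun_add hf hg]; rfl

lemma pd_mul {N : ℕ} {i : Fin N} {f g : Euc N → ℝ} {x : Euc N}
    (hf : DifferentiableAt ℝ f x) (hg : DifferentiableAt ℝ g x) :
    pd N i (fun y => f y * g y) x = f x * pd N i g x + pd N i f x * g x := by
  unfold pd
  rw [fderiv_fun_mul hf hg]; simp; ring

lemma pd_comp {N : ℕ} {i : Fin N} {F : ℝ → ℝ} {f : Euc N → ℝ} {x : Euc N}
    (hF : DifferentiableAt ℝ F (f x)) (hf : DifferentiableAt ℝ f x) :
    pd N i (fun y => F (f y)) x = deriv F (f x) * pd N i f x := by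
  unfold pd
  have := (hF.hasDerivAt.comp_hasFDerivAt x hf.hasFDerivAt).fderiv
  rw [show (fun y => F (f y)) = F ∘ f from rfl, this]; simp

lemma evDiff {N : ℕ} {f : Euc N → ℝ} {x : Euc N} (hf : ContDiffAt ℝ 2 f x) :
    ∀ᶠ y in 𝓝 x, DifferentiableAt ℝ f y := by
  filter_upwards [hf.eventually (by simp)] with y hy using hy.differentiableAt (by norm_num)

lemma pdDiff {N : ℕ} {i : Fin N} {f : Euc N → ℝ} {x : Euc N} (hf : ContDiffAt ℝ 2 f x) :
    DifferentiableAt ℝ (pd N i f) x :=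
  (pd_contDiffAt (m := 1) (n := 2) hf (by norm_num)).differentiableAt (by norm_num)

lemma pd2_add {N : ℕ} {i : Fin N} {f g : Euc N → ℝ} {x : Euc N}
    (hf : ContDiffAt ℝ 2 f x) (hg : ContDiffAt ℝ 2 g x) :
    pd N i (pd N i (fun y => f y + g y)) x = pd N i (pd N i f) x + pd N i (pd N i g) x := by
  have h : pd N i (fun y => f y + g y) =ᶠ[𝓝 x] fun y => pd N i f y + pd N i g y := by
    filter_upwards [evDiff hf, evDiff hg] with y h1 h2 using pd_add h1 h2
  rw [pd_congr h, pd_add (pdDiff hf) (pdDiff hg)]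

lemma pd2_mul {N : ℕ} {i : Fin N} {f g : Euc N → ℝ} {x : Euc N}
    (hf : ContDiffAt ℝ 2 f x) (hg : ContDiffAt ℝ 2 g x) :
    pd N i (pd N i (fun y => f y * g y)) x = f x * pd N i (pd N i g) x +
      2 * (pd N i f x * pd N i g x) + pd N i (pd N i f) x * g x := by
  have h : pd N i (fun y => f y * g y) =ᶠ[𝓝 x]
      fun y => f y * pd N i g y + pd N i f y * g y := by
    filter_upwards [evDiff hf, evDiff hg] with y h1 h2 using pd_mul h1 h2
  have df := (evDiff hf).self_of_nhds
  have dg := (evDiff hg).self_of_nhds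
  rw [pd_congr h, pd_add (f := fun y => f y * pd N i g y) (g := fun y => pd N i f y * g y) (df.mul (pdDiff hg)) ((pdDiff hf).mul dg), pd_mul df (pdDiff hg),
    pd_mul (pdDiff hf) dg]
  ring

lemma pd2_comp {N : ℕ} {i : Fin N} {F : ℝ → ℝ} {f : Euc N → ℝ} {x : Euc N}
    (hF : ContDiffAt ℝ 2 F (f x)) (hf : ContDiffAt ℝ 2 f x) :
    pd N i (pd N i (fun y => F (f y))) x =
      deriv (deriv F) (f x) * pd N i f x ^ 2 + deriv F (f x) * pd N i (pd N i f) x := by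
  have hFe : ∀ᶠ z in 𝓝 (f x), DifferentiableAt ℝ F z := by
    filter_upwards [hF.eventually (by simp)] with y hy using hy.differentiableAt (by norm_num)
  have df := (evDiff hf).self_of_nhds
  have h : pd N i (fun y => F (f y)) =ᶠ[𝓝 x]
      fun y => deriv F (f y) * pd N i f y := by
    filter_upwards [evDiff hf, df.continuousAt.eventually hFe] with y h1 h2 using pd_comp h2 h1
  have hF' : DifferentiableAt ℝ (deriv F) (f x) := by
    have : ContDiffAt ℝ 1 (deriv F) (f x) := by
      have := hF.fderiv_right (m := 1) (by norm_num)
      exact this.clm_apply contDiffAt_const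
    exact this.differentiableAt (by norm_num)
  have hc : DifferentiableAt ℝ (fun y => deriv F (f y)) x := hF'.comp x df
  rw [pd_congr h, pd_mul hc (pdDiff hf), pd_comp hF' df]
  ring

/-! ### The function `log ‖x‖` -/

lemma logn_contDiffAt {N : ℕ} {x : Euc N} (hx : x ≠ 0) {n : WithTop ℕ∞} :
    ContDiffAt ℝ n (fun y : Euc N => Real.log ‖y‖) x :=
  (contDiffAt_norm ℝ hx).log (norm_ne_zero_iff.2 hx)

lemma pd_coord {N : ℕ} (i : Fin N) (x : Euc N) : pd N i (fun y => y i) x = 1 := by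
  unfold pd
  have : (fun y : Euc N => y i) = (EuclideanSpace.proj i : Euc N →L[ℝ] ℝ) := rfl
  rw [this, ContinuousLinearMap.fderiv]; simp

lemma pd_normsq {N : ℕ} (i : Fin N) (x : Euc N) : pd N i (fun y => ‖y‖ ^ 2) x = 2 * x i := by
  unfold pd
  have := (hasStrictFDerivAt_norm_sq x).hasFDerivAt.fderiv
  rw [this]
  simp [EuclideanSpace.inner_single_right]

lemma pd_logn {N : ℕ} (i : Fin N) {x : Euc N} (hx : x ≠ 0) :
    pd N i (fun y => Real.log ‖y‖) x = x i * (‖x‖ ^ 2)⁻¹ := by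
  have h0 : (‖x‖ ^ 2) ≠ 0 := pow_ne_zero _ (norm_ne_zero_iff.2 hx)
  have : (fun y : Euc N => Real.log ‖y‖) = fun y => (fun z => 2⁻¹ * Real.log z) (‖y‖ ^ 2) := by
    funext y; simp [Real.log_pow]
  rw [this, pd_comp (F := fun z => 2⁻¹ * Real.log z) (f := fun y => ‖y‖ ^ 2), pd_normsq]
  · rw [deriv_const_mul _ (Real.differentiableAt_log h0), Real.deriv_log]; ring
  · exact (Real.differentiableAt_log h0).const_mul _
  · exact (contDiff_norm_sq ℝ (n := 1)).differentiable (by norm_num) x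

lemma pd2_logn {N : ℕ} (i : Fin N) {x : Euc N} (hx : x ≠ 0) :
    pd N i (pd N i (fun y => Real.log ‖y‖)) x =
      (‖x‖ ^ 2)⁻¹ - 2 * x i ^ 2 * ((‖x‖ ^ 2)⁻¹) ^ 2 := by
  have h0 : (‖x‖ ^ 2) ≠ 0 := pow_ne_zero _ (norm_ne_zero_iff.2 hx)
  have h : pd N i (fun y => Real.log ‖y‖) =ᶠ[𝓝 x] fun y => y i * (‖y‖ ^ 2)⁻¹ := by
    filter_upwards [isOpen_ne.mem_nhds hx] with y hy using pd_logn i hy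
  have dn : DifferentiableAt ℝ (fun y : Euc N => ‖y‖ ^ 2) x :=
    (contDiff_norm_sq ℝ (n := 1)).differentiable (by norm_num) x
  rw [pd_congr h, pd_mul (f := fun y => y i) (g := fun y => (‖y‖ ^ 2)⁻¹),
    pd_coord, pd_comp (F := fun z => z⁻¹) (f := fun y => ‖y‖ ^ 2), pd_normsq]
  · rw [deriv_inv]; field_simp; ring
  · exact differentiableAt_inv h0
  · exact dn
  · exact (EuclideanSpace.proj i : Euc N →L[ℝ] ℝ).differentiableAt
  · exact dn.inv h0

lemma sum_pd_logn_sq {N : ℕ} {x : Euc N} (hx : x ≠ 0) :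
    ∑ i, pd N i (fun y => Real.log ‖y‖) x ^ 2 = (‖x‖ ^ 2)⁻¹ := by
  have h0 : (‖x‖ ^ 2) ≠ 0 := pow_ne_zero _ (norm_ne_zero_iff.2 hx)
  simp_rw [pd_logn _ hx, mul_pow]
  rw [← Finset.sum_mul, ← EuclideanSpace.real_norm_sq_eq]
  field_simp

lemma sum_pd2_logn {N : ℕ} {x : Euc N} (hx : x ≠ 0) :
    ∑ i, pd N i (pd N i (fun y => Real.log ‖y‖)) x = ((N : ℝ) - 2) * (‖x‖ ^ 2)⁻¹ := by
  have h0 : (‖x‖ ^ 2) ≠ 0 := pow_ne_zero _ (norm_ne_zero_iff.2 hx)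
  simp_rw [pd2_logn _ hx]
  rw [Finset.sum_sub_distrib, ← Finset.sum_mul, ← Finset.mul_sum, ← EuclideanSpace.real_norm_sq_eq]
  simp
  field_simp

lemma sum_coord_pd {N : ℕ} (f : Euc N → ℝ) (x : Euc N) :
    ∑ i, x i * pd N i f x = fderiv ℝ f x x := by
  unfold pd
  have : x = ∑ i, x i • (EuclideanSpace.single i (1:ℝ)) := by
    ext j; simp [Finset.sum_apply, Pi.single_apply]
  have h2 : fderiv ℝ f x x = fderiv ℝ f x (∑ i, x i • (EuclideanSpace.single i (1:ℝ))) := by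
    rw [← this]
  rw [h2, map_sum]
  simp

lemma sum_pd_logn_mul {N : ℕ} {φ : Euc N → ℝ} {x : Euc N} (hx : x ≠ 0)
    (hd : DifferentiableAt ℝ (fun y => φ (‖y‖⁻¹ • y)) x) :
    ∑ i, pd N i (fun y => Real.log ‖y‖) x * pd N i (fun y => φ (‖y‖⁻¹ • y)) x = 0 := by
  simp_rw [pd_logn _ hx]
  have : ∀ i, x i * (‖x‖ ^ 2)⁻¹ * pd N i (fun y => φ (‖y‖⁻¹ • y)) x =
      (‖x‖ ^ 2)⁻¹ * (x i * pd N i (fun y => φ (‖y‖⁻¹ • y)) x) := fun i => by ring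
  simp_rw [this]
  rw [← Finset.mul_sum, sum_coord_pd]
  set Φ := fun y => φ (‖y‖⁻¹ • y) with hΦ
  have h1 : HasDerivAt (fun s : ℝ => s • x) x 1 := by
    simpa using (hasDerivAt_id (1:ℝ)).smul_const x
  have hd' : HasFDerivAt Φ (fderiv ℝ Φ x) ((1:ℝ) • x) := by simpa using hd.hasFDerivAt
  have h2 : HasDerivAt (fun s : ℝ => Φ (s • x)) (fderiv ℝ Φ x x) 1 :=
    HasFDerivAt.comp_hasDerivAt (l := Φ) (f := fun s : ℝ => s • x) (1:ℝ) hd' h1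
  have h3 : (fun s : ℝ => Φ (s • x)) =ᶠ[𝓝 1] fun _ => Φ x := by
    filter_upwards [lt_mem_nhds (zero_lt_one (α := ℝ))] with s hs
    simp only [hΦ, norm_smul, Real.norm_eq_abs, abs_of_pos hs, smul_smul]
    congr 2
    field_simp
  have h4 : HasDerivAt (fun s : ℝ => Φ (s • x)) 0 1 :=
    (hasDerivAt_const (1:ℝ) (Φ x)).congr_of_eventuallyEq h3
  rw [h2.unique h4, mul_zero]


/-! ### Integration by parts -/

lemma integrable_mul_of_tsupport {N : ℕ} {U : Set (Euc N)} (hU : IsOpen U) {f g : Euc N → ℝ}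
    (hf : ContinuousOn f U) (hg : Continuous g) (hc : HasCompactSupport g)
    (hs : tsupport g ⊆ U) : Integrable (fun x => f x * g x) := by
  have hcont : Continuous (fun x => f x * g x) := by
    refine continuous_of_tsupport fun x hx => ?_
    have hx' : x ∈ tsupport g := closure_mono (fun y hy => by
      simp only [Function.mem_support] at hy ⊢; exact right_ne_zero_of_mul hy) hx
    exact (hf.continuousAt (hU.mem_nhds (hs hx'))).mul hg.continuousAt
  exact hcont.integrable_of_hasCompactSupport hc.mul_left

lemma tsupport_pd {N : ℕ} (i : Fin N) (f : Euc N → ℝ) : tsupport (pd N i f) ⊆ tsupport f :=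
  closure_minimal (fun x hx => by
    have : x ∈ Function.support (fderiv ℝ f) := by
      simp only [Function.mem_support] at hx ⊢
      intro h; apply hx; unfold pd; rw [h]; rfl
    exact support_fderiv_subset ℝ this) (isClosed_tsupport f)

lemma ibp_pd {N : ℕ} {U : Set (Euc N)} (hU : IsOpen U) {v ψ : Euc N → ℝ} (i : Fin N)
    (hv : ContDiffOn ℝ 2 v U) (hψ : ContDiff ℝ 2 ψ) (hc : HasCompactSupport ψ)
    (hs : tsupport ψ ⊆ U) :
    Integrable (fun x => v x * pd N i (pd N i ψ) x) ∧
    Integrable (fun x => pd N i (pd N i v) x * ψ x) ∧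
    ∫ x, v x * pd N i (pd N i ψ) x = ∫ x, pd N i (pd N i v) x * ψ x := by
  have hvat : ∀ x ∈ U, ContDiffAt ℝ 2 v x := fun x hx => hv.contDiffAt (hU.mem_nhds hx)
  have c1ψ : ContDiff ℝ 1 (pd N i ψ) :=
    contDiff_iff_contDiffAt.2 fun x => pd_contDiffAt (m := 1) (n := 2) hψ.contDiffAt le_rfl
  have c0ψ : Continuous (pd N i (pd N i ψ)) := continuous_iff_continuousAt.2 fun x =>
    (pd_contDiffAt (m := 0) (n := 1) c1ψ.contDiffAt le_rfl).continuousAt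
  have c1v : ∀ x ∈ U, ContDiffAt ℝ 1 (pd N i v) x := fun x hx =>
    pd_contDiffAt (m := 1) (n := 2) (hvat x hx) le_rfl
  have c0v : ContinuousOn (pd N i (pd N i v)) U := fun x hx =>
    (pd_contDiffAt (m := 0) (n := 1) (c1v x hx) le_rfl).continuousAt.continuousWithinAt
  have cv1 : ContinuousOn (pd N i v) U := fun x hx => (c1v x hx).continuousAt.continuousWithinAt
  have s1 : tsupport (pd N i ψ) ⊆ tsupport ψ := tsupport_pd i ψ
  have s2 : tsupport (pd N i (pd N i ψ)) ⊆ tsupport ψ := (tsupport_pd i _).trans s1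
  have k1 : HasCompactSupport (pd N i ψ) := hc.of_isClosed_subset (isClosed_tsupport _) s1
  have k2 : HasCompactSupport (pd N i (pd N i ψ)) :=
    hc.of_isClosed_subset (isClosed_tsupport _) s2
  have I1 := integrable_mul_of_tsupport hU hv.continuousOn c0ψ k2 (s2.trans hs)
  have I2 := integrable_mul_of_tsupport hU c0v hψ.continuous hc hs
  have I3 := integrable_mul_of_tsupport hU cv1 c1ψ.continuous k1 (s1.trans hs)
  have I4 := integrable_mul_of_tsupport hU hv.continuousOn c1ψ.continuous k1 (s1.trans hs)
  have I5 := integrable_mul_of_tsupport hU cv1 hψ.continuous hc hs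
  refine ⟨I1, I2, ?_⟩
  have e1 := integral_mul_fderiv_eq_neg_fderiv_mul_of_integrable (μ := volume)
    (v := EuclideanSpace.single i (1:ℝ)) (f := v) (g := pd N i ψ) I3 I1 I4
    (fun x hx => (hvat x (hs (s1 hx))).differentiableAt (by norm_num))
    (fun x _ => c1ψ.differentiable (by norm_num) x)
  have e2 := integral_mul_fderiv_eq_neg_fderiv_mul_of_integrable (μ := volume)
    (v := EuclideanSpace.single i (1:ℝ)) (f := pd N i v) (g := ψ) I2 I3 I5
    (fun x hx => (c1v x (hs hx)).differentiableAt (by norm_num))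
    (fun x _ => hψ.differentiable (by norm_num) x)
  have e1' : ∫ x, v x * pd N i (pd N i ψ) x = - ∫ x, pd N i v x * pd N i ψ x := e1
  have e2' : ∫ x, pd N i v x * pd N i ψ x = - ∫ x, pd N i (pd N i v) x * ψ x := e2
  rw [e1', e2', neg_neg]

lemma ibp_lap {N : ℕ} {U : Set (Euc N)} (hU : IsOpen U) {v ψ : Euc N → ℝ}
    (hv : ContDiffOn ℝ 2 v U) (hψ : ContDiff ℝ 2 ψ) (hc : HasCompactSupport ψ)
    (hs : tsupport ψ ⊆ U) :
    Integrable (fun x => v x * lap N ψ x) ∧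
    Integrable (fun x => lap N v x * ψ x) ∧
    ∫ x, v x * lap N ψ x = ∫ x, lap N v x * ψ x := by
  have h1 : (fun x => v x * lap N ψ x) = fun x => ∑ i, v x * pd N i (pd N i ψ) x := by
    funext x; rw [lap_eq hψ.contDiffAt, Finset.mul_sum]
  have h2 : (fun x => lap N v x * ψ x) = fun x => ∑ i, pd N i (pd N i v) x * ψ x := by
    funext x
    by_cases hx : x ∈ tsupport ψ
    · rw [lap_eq (hv.contDiffAt (hU.mem_nhds (hs hx))), Finset.sum_mul]
    · simp [image_eq_zero_of_notMem_tsupport hx]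
  rw [h1, h2]
  have H := fun i => ibp_pd hU i hv hψ hc hs
  refine ⟨integrable_finsetSum _ fun i _ => (H i).1,
    integrable_finsetSum _ fun i _ => (H i).2.1, ?_⟩
  rw [integral_finsetSum _ fun i _ => (H i).1, integral_finsetSum _ fun i _ => (H i).2.1]
  exact Finset.sum_congr rfl fun i _ => (H i).2.2

/-! ### One-variable auxiliary functions -/

lemma S_cd : ContDiff ℝ 2 Real.smoothTransition := Real.smoothTransition.contDiff (n := 2)

lemma S_deriv_nonneg (x : ℝ) : 0 ≤ deriv Real.smoothTransition x :=
  Real.smoothTransition.monotone.deriv_nonneg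

/-- primitive of a C¹ function -/
lemma prim_facts {s : ℝ → ℝ} (hs : ContDiff ℝ 1 s) :
    (deriv (fun y => ∫ z in (0:ℝ)..y, s z) = s) ∧
    ContDiff ℝ 2 (fun y => ∫ z in (0:ℝ)..y, s z) := by
  have h1 : ∀ y, HasDerivAt (fun y => ∫ z in (0:ℝ)..y, s z) (s y) y := fun y =>
    intervalIntegral.integral_hasDerivAt_right (hs.continuous.intervalIntegrable _ _)
      (hs.continuous.stronglyMeasurableAtFilter _ _) hs.continuous.continuousAt
  have h2 : deriv (fun y => ∫ z in (0:ℝ)..y, s z) = s := funext fun y => (h1 y).deriv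
  refine ⟨h2, ?_⟩
  rw [show (2 : WithTop ℕ∞) = 1 + 1 by norm_num, contDiff_succ_iff_deriv]
  exact ⟨fun y => (h1 y).differentiableAt, by simp, by rw [h2]; exact hs⟩

lemma exists_F (ε : ℝ) (hε : 0 < ε) : ∃ F : ℝ → ℝ, ContDiff ℝ 2 F ∧ (∀ y ≤ ε, F y = 0) ∧
    (∀ y, 0 ≤ deriv (deriv F) y) ∧ (∀ y, 0 ≤ y → y - 2 * ε ≤ F y) ∧ (∀ y, 0 ≤ y → F y ≤ y) ∧
    (∀ y, 0 ≤ F y) ∧ (∀ y, 0 ≤ y → |F y - y * deriv F y| ≤ 2 * ε) := by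
  set s : ℝ → ℝ := fun y => Real.smoothTransition ((y - ε) / ε) with hs
  have scd : ContDiff ℝ 1 s := (S_cd.of_le (by norm_num)).comp (by fun_prop)
  have smono : Monotone s := fun a b hab => Real.smoothTransition.monotone (by gcongr)
  obtain ⟨hd, hcd⟩ := prim_facts scd
  set F : ℝ → ℝ := fun y => ∫ z in (0:ℝ)..y, s z with hF
  have Fd : ∀ y, HasDerivAt F (s y) y := fun y => by
    have := (hcd.differentiable (by norm_num) y).hasDerivAt
    rwa [hd] at this
  have s0 : ∀ y, 0 ≤ s y := fun y => Real.smoothTransition.nonneg _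
  have s1 : ∀ y, s y ≤ 1 := fun y => Real.smoothTransition.le_one _
  have F0 : ∀ y ≤ ε, F y = 0 := fun y hy => by
    rw [hF]; dsimp only
    rw [intervalIntegral.integral_congr (g := fun _ => 0), intervalIntegral.integral_zero]
    intro z hz
    have : z ≤ ε := hz.2.trans (max_le hε.le hy)
    exact Real.smoothTransition.zero_of_nonpos (div_nonpos_of_nonpos_of_nonneg (by linarith) hε.le)
  have Fmono : Monotone F := monotone_of_deriv_nonneg (fun y => (Fd y).differentiableAt)
    fun y => by rw [(Fd y).deriv]; exact s0 y
  have Fnn : ∀ y, 0 ≤ F y := fun y => by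
    rcases le_total y ε with h | h
    · rw [F0 y h]
    · rw [← F0 ε le_rfl]; exact Fmono h
  have Fle : ∀ y, 0 ≤ y → F y ≤ y := by
    intro y hy
    have : Monotone (fun y => y - F y) := monotone_of_deriv_nonneg
      (fun y => differentiableAt_id.sub (Fd y).differentiableAt)
      fun y => by
        have := ((hasDerivAt_id y).sub (Fd y)).deriv
        have e : deriv (fun y => y - F y) y = 1 - s y := this
        rw [e]; linarith [s1 y]
    have := this hy
    simp only [F0 0 hε.le] at this; linarith
  have Fge : ∀ y, 0 ≤ y → y - 2 * ε ≤ F y := by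
    intro y hy
    rcases le_total y (2 * ε) with h | h
    · linarith [Fnn y]
    · have hm : MonotoneOn (fun y => F y - y) (Set.Ici (2 * ε)) := by
        refine monotoneOn_of_deriv_nonneg (convex_Ici _)
          (fun y _ => ((Fd y).sub (hasDerivAt_id y)).continuousAt.continuousWithinAt)
          (fun y _ => ((Fd y).sub (hasDerivAt_id y)).differentiableAt.differentiableWithinAt) ?_
        intro z hz
        rw [interior_Ici] at hz
        have e : deriv (fun y => F y - y) z = s z - 1 := ((Fd z).sub (hasDerivAt_id z)).deriv
        rw [e]
        have : s z = 1 := Real.smoothTransition.one_of_one_le (by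
          rw [le_div_iff₀ hε]; linarith [Set.mem_Ioi.1 hz])
        linarith
      have := hm (Set.mem_Ici.2 le_rfl) (Set.mem_Ici.2 h) h
      simp only at this
      linarith [Fnn (2 * ε)]
  refine ⟨F, hcd, F0, fun y => ?_, Fge, Fle, Fnn, fun y hy => ?_⟩
  · rw [hd]; exact smono.deriv_nonneg
  · rw [hd, abs_le]
    have := Fge y hy
    refine ⟨by nlinarith [s1 y], ?_⟩
    rcases le_total y (2 * ε) with h | h
    · nlinarith [Fle y hy, s0 y]
    · have : s y = 1 := Real.smoothTransition.one_of_one_le (by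
          rw [le_div_iff₀ hε]; linarith)
      rw [this]; linarith [Fle y hy]


lemma S_bound : ∃ B : ℝ, 0 < B ∧ (∀ x, |deriv Real.smoothTransition x| ≤ B) ∧
    ∀ x, |deriv (deriv Real.smoothTransition) x| ≤ B := by
  have hd1 : ContDiff ℝ 1 (deriv Real.smoothTransition) := by
    have := S_cd
    rw [show (2 : WithTop ℕ∞) = 1 + 1 by norm_num, contDiff_succ_iff_deriv] at this
    exact this.2.2
  have hs1 : HasCompactSupport (deriv Real.smoothTransition) := by
    refine HasCompactSupport.intro (isCompact_Icc (a := (0:ℝ)) (b := 1)) fun x hx => ?_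
    rw [Set.mem_Icc, not_and_or, not_le, not_le] at hx
    rcases hx with hx | hx
    · have : Real.smoothTransition =ᶠ[𝓝 x] fun _ => 0 := by
        filter_upwards [gt_mem_nhds hx] with y hy using Real.smoothTransition.zero_of_nonpos hy.le
      rw [this.deriv_eq]; simp
    · have : Real.smoothTransition =ᶠ[𝓝 x] fun _ => 1 := by
        filter_upwards [lt_mem_nhds hx] with y hy using Real.smoothTransition.one_of_one_le hy.le
      rw [this.deriv_eq]; simp
  obtain ⟨B1, hB1⟩ := hd1.continuous.bounded_above_of_compact_support hs1
  obtain ⟨B2, hB2⟩ := (hd1.continuous_deriv le_rfl).bounded_above_of_compact_support hs1.deriv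
  refine ⟨max 1 (max B1 B2), by positivity, fun x => ?_, fun x => ?_⟩
  · exact (hB1 x).trans (by simp)
  · exact (hB2 x).trans (by simp)

lemma exists_k (β : ℝ) (hβ : 0 ≤ β) : ∃ C : ℝ, 0 < C ∧ ∃ Q : ℝ → ℝ, Continuous Q ∧
    (∀ τ, 0 ≤ Q τ) ∧ (∀ τ, τ < 0 → Q τ = 0) ∧ (∀ τ, 1 < τ → Q τ = 0) ∧
    (∃ τ, 0 < τ ∧ τ < 1 ∧ 0 < Q τ) ∧
    ∀ T : ℝ, 1 ≤ T → ∃ k : ℝ → ℝ, ContDiff ℝ 2 k ∧ (∀ τ, 0 ≤ k τ) ∧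
      (∀ τ, τ ≤ 0 → k τ = 0) ∧ (∀ τ, 2 * T ≤ τ → k τ = 0) ∧
      (∀ τ, 0 ≤ τ → τ ≤ 2 * T →
        Q τ - C / T ≤ deriv (deriv k) τ + β * deriv k τ) := by
  obtain ⟨B, hB, hB1, hB2⟩ := S_bound
  have hd1 : ContDiff ℝ 1 (deriv Real.smoothTransition) := by
    have := S_cd
    rw [show (2 : WithTop ℕ∞) = 1 + 1 by norm_num, contDiff_succ_iff_deriv] at this
    exact this.2.2
  set S := Real.smoothTransition with hS
  have Sd : ∀ x, HasDerivAt S (deriv S x) x := fun x =>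
    (S_cd.differentiable (by norm_num) x).hasDerivAt
  have Sdd : ∀ x, HasDerivAt (deriv S) (deriv (deriv S) x) x := fun x =>
    (hd1.differentiable (by norm_num) x).hasDerivAt
  set s : ℝ → ℝ := fun τ => Real.exp (-β * τ) * S τ with hs
  have scd : ContDiff ℝ 1 s := by
    have : ContDiff ℝ 1 S := S_cd.of_le (by norm_num)
    exact ContDiff.mul (by fun_prop) this
  have sd : ∀ τ, HasDerivAt s (-β * s τ + Real.exp (-β * τ) * deriv S τ) τ := fun τ => by
    have h1 : HasDerivAt (fun τ => Real.exp (-β * τ)) (Real.exp (-β * τ) * (-β)) τ := by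
      have := ((hasDerivAt_id τ).const_mul (-β)).exp
      simpa using this
    exact (h1.mul (Sd τ)).congr_deriv (by simp only [hs]; ring)
  obtain ⟨hd, hcd⟩ := prim_facts scd
  set θ : ℝ → ℝ := fun y => ∫ z in (0:ℝ)..y, s z with hθ
  have θd : ∀ y, HasDerivAt θ (s y) y := fun y => by
    have := (hcd.differentiable (by norm_num) y).hasDerivAt
    rwa [hd] at this
  have s0 : ∀ y, 0 ≤ s y := fun y =>
    mul_nonneg (Real.exp_pos _).le (Real.smoothTransition.nonneg _)
  have s1 : ∀ y, 0 ≤ y → s y ≤ 1 := fun y hy =>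
    mul_le_one₀ (Real.exp_le_one_iff.2 (by nlinarith)) (Real.smoothTransition.nonneg _)
      (Real.smoothTransition.le_one _)
  have θ0 : ∀ y ≤ 0, θ y = 0 := fun y hy => by
    rw [hθ]; dsimp only
    rw [intervalIntegral.integral_congr (g := fun _ => 0), intervalIntegral.integral_zero]
    intro z hz
    have : z ≤ 0 := hz.2.trans (max_le le_rfl hy)
    simp only [hs, hS, Real.smoothTransition.zero_of_nonpos this, mul_zero]
  have θmono : Monotone θ := monotone_of_deriv_nonneg (fun y => (θd y).differentiableAt)
    fun y => by rw [(θd y).deriv]; exact s0 y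
  have θnn : ∀ y, 0 ≤ θ y := fun y => by
    rcases le_total y 0 with h | h
    · rw [θ0 y h]
    · rw [← θ0 0 le_rfl]; exact θmono h
  have θle : ∀ y, 0 ≤ y → θ y ≤ y := by
    intro y hy
    have hm : MonotoneOn (fun y => y - θ y) (Set.Ici 0) := by
      refine monotoneOn_of_deriv_nonneg (convex_Ici _)
        (fun y _ => ((hasDerivAt_id y).sub (θd y)).continuousAt.continuousWithinAt)
        (fun y _ => ((hasDerivAt_id y).sub (θd y)).differentiableAt.differentiableWithinAt) ?_
      intro z hz
      rw [interior_Ici] at hz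
      have e : deriv (fun y => y - θ y) z = 1 - s z := ((hasDerivAt_id z).sub (θd z)).deriv
      rw [e]; linarith [s1 z (Set.mem_Ioi.1 hz).le]
    have := hm (Set.mem_Ici.2 le_rfl) (Set.mem_Ici.2 hy) hy
    simp only [θ0 0 le_rfl] at this; linarith
  have βθ : ∀ y, 0 ≤ y → β * θ y ≤ 1 := by
    intro y hy
    have hD : ∀ y, HasDerivAt (fun y => -Real.exp (-β * y) - β * θ y)
        (β * Real.exp (-β * y) - β * s y) y := fun y => by
      have h1 : HasDerivAt (fun τ => Real.exp (-β * τ)) (Real.exp (-β * y) * (-β)) y := by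
        have := ((hasDerivAt_id y).const_mul (-β)).exp
        simpa using this
      exact (h1.neg.sub ((θd y).const_mul β)).congr_deriv (by ring)
    have hm : Monotone (fun y => -Real.exp (-β * y) - β * θ y) :=
      monotone_of_deriv_nonneg (fun y => (hD y).differentiableAt) fun y => by
        rw [(hD y).deriv, ← mul_sub]
        refine mul_nonneg hβ (sub_nonneg.2 ?_)
        exact mul_le_of_le_one_right (Real.exp_pos _).le (Real.smoothTransition.le_one _)
    have := hm hy
    simp only [θ0 0 le_rfl] at this
    simp at this
    have := Real.exp_pos (-(β * y))
    linarith
  refine ⟨5 * B, by positivity, fun τ => Real.exp (-β * τ) * deriv S τ, ?_, ?_, ?_, ?_, ?_, ?_⟩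
  · exact Continuous.mul (by fun_prop) hd1.continuous
  · exact fun τ => mul_nonneg (Real.exp_pos _).le (S_deriv_nonneg τ)
  · intro x hx
    have : S =ᶠ[𝓝 x] fun _ => 0 := by
      filter_upwards [gt_mem_nhds hx] with y hy using Real.smoothTransition.zero_of_nonpos hy.le
    simp only [this.deriv_eq]; simp
  · intro x hx
    have : S =ᶠ[𝓝 x] fun _ => 1 := by
      filter_upwards [lt_mem_nhds hx] with y hy using Real.smoothTransition.one_of_one_le hy.le
    simp only [this.deriv_eq]; simp
  · obtain ⟨c, hc, hc'⟩ := exists_deriv_eq_slope S (zero_lt_one (α := ℝ))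
      S_cd.continuous.continuousOn (S_cd.differentiable (by norm_num)).differentiableOn
    refine ⟨c, hc.1, hc.2, mul_pos (Real.exp_pos _) ?_⟩
    rw [hc']; simp [hS]
  intro T hT
  have T0 : 0 < T := by linarith
  set χ : ℝ → ℝ := fun τ => 1 - S (τ / T - 1) with hχ
  have χd : ∀ τ, HasDerivAt χ (-(deriv S (τ / T - 1) / T)) τ := fun τ => by
    have h1 : HasDerivAt (fun τ => τ / T - 1) (1 / T) τ :=
      ((hasDerivAt_id τ).div_const T).sub_const 1
    have h2 : HasDerivAt (fun τ => S (τ / T - 1)) (deriv S (τ / T - 1) * (1 / T)) τ :=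
      HasDerivAt.comp (h₂ := S) (h := fun τ => τ / T - 1) τ (Sd (τ / T - 1)) h1
    exact (h2.const_sub 1).congr_deriv (by ring)
  set χ1 : ℝ → ℝ := fun τ => -(deriv S (τ / T - 1) / T) with hχ1
  have χd1 : ∀ τ, HasDerivAt χ1 (-(deriv (deriv S) (τ / T - 1) / T ^ 2)) τ := fun τ => by
    have h1 : HasDerivAt (fun τ => τ / T - 1) (1 / T) τ :=
      ((hasDerivAt_id τ).div_const T).sub_const 1
    have h2 : HasDerivAt (fun τ => deriv S (τ / T - 1))
      (deriv (deriv S) (τ / T - 1) * (1 / T)) τ :=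
      HasDerivAt.comp (h₂ := deriv S) (h := fun τ => τ / T - 1) τ (Sdd (τ / T - 1)) h1
    exact (h2.div_const T).neg.congr_deriv (by field_simp)
  have χcd : ContDiff ℝ 2 χ := contDiff_const.sub (S_cd.comp (by fun_prop))
  have χ0 : ∀ τ, 0 ≤ χ τ := fun τ => sub_nonneg.2 (Real.smoothTransition.le_one _)
  have kd : deriv (fun τ => θ τ * χ τ) = fun τ => s τ * χ τ + θ τ * χ1 τ :=
    funext fun τ => ((θd τ).mul (χd τ)).deriv
  refine ⟨fun τ => θ τ * χ τ, hcd.mul χcd, fun τ => mul_nonneg (θnn τ) (χ0 τ),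
    fun τ hτ => by simp [θ0 τ hτ], fun τ hτ => ?_, fun τ h0 h2 => ?_⟩
  · have : S (τ / T - 1) = 1 := Real.smoothTransition.one_of_one_le (by
      have : 2 ≤ τ / T := by rw [le_div_iff₀ T0]; exact hτ
      linarith)
    simp [hχ, this]
  · have kdd : deriv (deriv (fun τ => θ τ * χ τ)) τ = ((-β * s τ + Real.exp (-β * τ) * deriv S τ)
        * χ τ + s τ * χ1 τ) + (s τ * χ1 τ + θ τ * (-(deriv (deriv S) (τ / T - 1) / T ^ 2))) := by
      rw [kd]
      exact (((sd τ).mul (χd τ)).add ((θd τ).mul (χd1 τ))).deriv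
    rw [kdd, kd]
    have hQ : Real.exp (-β * τ) * deriv S τ * χ τ = Real.exp (-β * τ) * deriv S τ := by
      rcases le_or_gt τ 1 with h | h
      · have : S (τ / T - 1) = 0 := Real.smoothTransition.zero_of_nonpos (by
          have : τ / T ≤ 1 := by rw [div_le_one T0]; linarith
          linarith)
        simp [hχ, this]
      · have : S =ᶠ[𝓝 τ] fun _ => 1 := by
          filter_upwards [lt_mem_nhds h] with y hy using Real.smoothTransition.one_of_one_le hy.le
        simp only [this.deriv_eq]; simp
    have a1 : |χ1 τ| ≤ B / T := by
      simp only [hχ1, abs_neg, abs_div, abs_of_pos T0]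
      gcongr; exact hB1 _
    have a2 : |deriv (deriv S) (τ / T - 1) / T ^ 2| ≤ B / T ^ 2 := by
      rw [abs_div, abs_of_pos (pow_pos T0 2)]
      gcongr; exact hB2 _
    set X := χ1 τ
    set Y := deriv (deriv S) (τ / T - 1) / T ^ 2
    have b1 : -(B / T) ≤ s τ * X := by
      have : |s τ * X| ≤ 1 * (B / T) := by
        rw [abs_mul]
        exact mul_le_mul (by rw [abs_of_nonneg (s0 _)]; exact s1 τ h0) a1 (abs_nonneg _) zero_le_one
      linarith [neg_abs_le (s τ * X)]
    have b2 : -(B / T) ≤ β * θ τ * X := by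
      have : |β * θ τ * X| ≤ 1 * (B / T) := by
        rw [abs_mul]
        exact mul_le_mul (by rw [abs_of_nonneg (mul_nonneg hβ (θnn _))]; exact βθ τ h0) a1
          (abs_nonneg _) zero_le_one
      linarith [neg_abs_le (β * θ τ * X)]
    have b3 : θ τ * Y ≤ 2 * (B / T) := by
      have : |θ τ * Y| ≤ (2 * T) * (B / T ^ 2) := by
        rw [abs_mul]
        exact mul_le_mul (by rw [abs_of_nonneg (θnn _)]; linarith [θle τ h0]) a2
          (abs_nonneg _) (by positivity)
      have e : (2 * T) * (B / T ^ 2) = 2 * (B / T) := by field_simp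
      linarith [le_abs_self (θ τ * Y)]
    have e5 : 5 * B / T = 5 * (B / T) := by ring
    rw [e5]
    simp only
    nlinarith


/-! ### Pointwise differential inequalities -/

lemma pd_const_mul {N : ℕ} {i : Fin N} {f : Euc N → ℝ} {x : Euc N} (c : ℝ)
    (hf : DifferentiableAt ℝ f x) : pd N i (fun y => c * f y) x = c * pd N i f x := by
  unfold pd
  rw [fderiv_const_mul hf]; rfl

lemma pd2_const_mul {N : ℕ} {i : Fin N} {f : Euc N → ℝ} {x : Euc N} (c : ℝ)
    (hf : ContDiffAt ℝ 2 f x) :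
    pd N i (pd N i (fun y => c * f y)) x = c * pd N i (pd N i f) x := by
  have h : pd N i (fun y => c * f y) =ᶠ[𝓝 x] fun y => c * pd N i f y := by
    filter_upwards [evDiff hf] with y h1 using pd_const_mul c h1
  rw [pd_congr h, pd_const_mul c (pdDiff hf)]

lemma pd_log {N : ℕ} {i : Fin N} {f : Euc N → ℝ} {x : Euc N}
    (hf : ContDiffAt ℝ 2 f x) (h0 : 0 < f x) :
    pd N i (fun y => Real.log (f y)) x = pd N i f x / f x := by
  rw [pd_comp (F := Real.log) (Real.differentiableAt_log h0.ne') (hf.differentiableAt (by norm_num)),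
    Real.deriv_log]
  ring

lemma pd2_log {N : ℕ} {i : Fin N} {f : Euc N → ℝ} {x : Euc N}
    (hf : ContDiffAt ℝ 2 f x) (h0 : 0 < f x) :
    pd N i (pd N i (fun y => Real.log (f y))) x =
      pd N i (pd N i f) x / f x - (pd N i f x / f x) ^ 2 := by
  rw [pd2_comp (F := Real.log) (Real.contDiffAt_log.2 h0.ne') hf, Real.deriv_log]
  have : deriv Real.log = fun z => z⁻¹ := by funext z; exact Real.deriv_log z
  rw [this, deriv_inv]
  field_simp
  ring

lemma super_v {N : ℕ} {x : Euc N} {u τ Φ : Euc N → ℝ} {R n lam μ γ a : ℝ}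
    (hu : ContDiffAt ℝ 2 u x) (hτ : ContDiffAt ℝ 2 τ x) (hΦ : ContDiffAt ℝ 2 Φ x)
    (u0 : 0 < u x) (Φ0 : 0 < Φ x) (h1 : ∑ i, pd N i τ x ^ 2 = R)
    (h2 : ∑ i, pd N i (pd N i τ) x = n * R) (h3 : ∑ i, pd N i τ x * pd N i Φ x = 0)
    (h4 : ∑ i, pd N i (pd N i Φ) x = -lam * R * Φ x)
    (h5 : ∑ i, pd N i (pd N i u) x ≤ -μ * R * u x) (hγ : γ * (γ + n) = lam - μ)
    (a0 : 0 ≤ a) (a1 : a ≤ 1) :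
    ContDiffAt ℝ 2 (fun y => Real.exp (a * Real.log (u y) +
      (1 - a) * (γ * τ y + Real.log (Φ y)))) x ∧
    lap N (fun y => Real.exp (a * Real.log (u y) + (1 - a) * (γ * τ y + Real.log (Φ y)))) x ≤
      -μ * R * Real.exp (a * Real.log (u x) + (1 - a) * (γ * τ x + Real.log (Φ x))) := by
  have clu : ContDiffAt ℝ 2 (fun y => Real.log (u y)) x := hu.log u0.ne'
  have clΦ : ContDiffAt ℝ 2 (fun y => Real.log (Φ y)) x := hΦ.log Φ0.ne'
  have cγτ : ContDiffAt ℝ 2 (fun y => γ * τ y) x := contDiffAt_const.mul hτ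
  have cB : ContDiffAt ℝ 2 (fun y => γ * τ y + Real.log (Φ y)) x := cγτ.add clΦ
  have cau : ContDiffAt ℝ 2 (fun y => a * Real.log (u y)) x := contDiffAt_const.mul clu
  have caB : ContDiffAt ℝ 2 (fun y => (1 - a) * (γ * τ y + Real.log (Φ y))) x :=
    contDiffAt_const.mul cB
  set ℓ : Euc N → ℝ := fun y => a * Real.log (u y) + (1 - a) * (γ * τ y + Real.log (Φ y)) with hℓ
  have cℓ : ContDiffAt ℝ 2 ℓ x := cau.add caB
  have d {f : Euc N → ℝ} (hf : ContDiffAt ℝ 2 f x) : DifferentiableAt ℝ f x :=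
    hf.differentiableAt (by norm_num)
  have cv : ContDiffAt ℝ 2 (fun y => Real.exp (ℓ y)) x := cℓ.exp
  refine ⟨cv, ?_⟩
  rw [lap_eq cv]
  have e1 : ∀ i, pd N i ℓ x = a * (pd N i u x / u x) +
      (1 - a) * (γ * pd N i τ x + pd N i Φ x / Φ x) := fun i => by
    rw [hℓ, pd_add (d cau) (d caB), pd_const_mul _ (d clu), pd_const_mul _ (d cB),
      pd_add (d cγτ) (d clΦ), pd_const_mul _ (d hτ), pd_log hu u0, pd_log hΦ Φ0]
  have e2 : ∀ i, pd N i (pd N i ℓ) x =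
      a * (pd N i (pd N i u) x / u x - (pd N i u x / u x) ^ 2) +
      (1 - a) * (γ * pd N i (pd N i τ) x +
        (pd N i (pd N i Φ) x / Φ x - (pd N i Φ x / Φ x) ^ 2)) := fun i => by
    rw [hℓ, pd2_add cau caB, pd2_const_mul _ clu, pd2_const_mul _ cB,
      pd2_add cγτ clΦ, pd2_const_mul _ hτ, pd2_log hu u0, pd2_log hΦ Φ0]
  have e3 : ∀ i, pd N i (pd N i (fun y => Real.exp (ℓ y))) x =
      Real.exp (ℓ x) * (pd N i ℓ x ^ 2 + pd N i (pd N i ℓ) x) := fun i => by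
    rw [pd2_comp (F := Real.exp) Real.contDiff_exp.contDiffAt cℓ, Real.deriv_exp, Real.deriv_exp]
    ring
  simp_rw [e3]
  rw [← Finset.mul_sum, mul_comm (-μ * R)]
  refine mul_le_mul_of_nonneg_left ?_ (Real.exp_pos _).le
  have e4 : ∀ i, pd N i ℓ x ^ 2 + pd N i (pd N i ℓ) x ≤
      (a / u x) * pd N i (pd N i u) x + (1 - a) * (γ * pd N i (pd N i τ) x +
        (1 / Φ x) * pd N i (pd N i Φ) x + γ ^ 2 * pd N i τ x ^ 2 +
        (2 * γ / Φ x) * (pd N i τ x * pd N i Φ x)) := fun i => by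
    rw [e1, e2]
    have key : ∀ A B : ℝ, (a * A + (1 - a) * B) ^ 2 ≤ a * A ^ 2 + (1 - a) * B ^ 2 := by
      intro A B
      nlinarith [mul_nonneg (mul_nonneg a0 (sub_nonneg.2 a1)) (sq_nonneg (A - B))]
    have := key (pd N i u x / u x) (γ * pd N i τ x + pd N i Φ x / Φ x)
    refine (add_le_add_left this _).trans (le_of_eq ?_)
    ring
  refine (Finset.sum_le_sum fun i _ => e4 i).trans ?_
  rw [Finset.sum_add_distrib, ← Finset.mul_sum, ← Finset.mul_sum, Finset.sum_add_distrib,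
    Finset.sum_add_distrib, Finset.sum_add_distrib, ← Finset.mul_sum, ← Finset.mul_sum,
    ← Finset.mul_sum, ← Finset.mul_sum, h1, h2, h3, h4]
  have h5' : a / u x * ∑ i, pd N i (pd N i u) x ≤ a / u x * (-μ * R * u x) :=
    mul_le_mul_of_nonneg_left h5 (div_nonneg a0 u0.le)
  refine (add_le_add_left h5' _).trans (le_of_eq ?_)
  field_simp
  linear_combination Φ x * R * (1 - a) * hγ

lemma sub_psi {N : ℕ} {x : Euc N} {τ Φ : Euc N → ℝ} {k F : ℝ → ℝ} {R n lam μ κ β t0 : ℝ}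
    (hτ : ContDiffAt ℝ 2 τ x) (hΦ : ContDiffAt ℝ 2 Φ x)
    (hk : ContDiff ℝ 2 k) (hF : ContDiff ℝ 2 F)
    (h1 : ∑ i, pd N i τ x ^ 2 = R)
    (h2 : ∑ i, pd N i (pd N i τ) x = n * R) (h3 : ∑ i, pd N i τ x * pd N i Φ x = 0)
    (h4 : ∑ i, pd N i (pd N i Φ) x = -lam * R * Φ x)
    (hκ : κ * (κ + n) = lam - μ) (hβ : 2 * κ + n = β)
    (k0 : 0 ≤ k (τ x - t0)) (F2 : 0 ≤ deriv (deriv F) (Φ x)) :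
    ContDiffAt ℝ 2 (fun y => (Real.exp (κ * τ y) * k (τ y - t0)) * F (Φ y)) x ∧
    R * Real.exp (κ * τ x) * ((deriv (deriv k) (τ x - t0) + β * deriv k (τ x - t0)) * F (Φ x) +
      lam * k (τ x - t0) * (F (Φ x) - Φ x * deriv F (Φ x)))
     ≤ lap N (fun y => (Real.exp (κ * τ y) * k (τ y - t0)) * F (Φ y)) x +
        μ * R * ((Real.exp (κ * τ x) * k (τ x - t0)) * F (Φ x)) := by
  set K : ℝ → ℝ := fun t => Real.exp (κ * t) * k (t - t0) with hK
  have E1 : ∀ t, HasDerivAt (fun t => Real.exp (κ * t)) (κ * Real.exp (κ * t)) t := fun t => by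
    have := ((hasDerivAt_id t).const_mul κ).exp
    simpa [mul_comm] using this
  have kd : ∀ t, HasDerivAt (fun t => k (t - t0)) (deriv k (t - t0)) t := fun t =>
    ((hk.differentiable (by norm_num) (t - t0)).hasDerivAt).comp_sub_const t t0
  have hk1 : ContDiff ℝ 1 (deriv k) := by
    rw [show (2 : WithTop ℕ∞) = 1 + 1 by norm_num, contDiff_succ_iff_deriv] at hk
    exact hk.2.2
  have kdd : ∀ t, HasDerivAt (fun t => deriv k (t - t0)) (deriv (deriv k) (t - t0)) t := fun t =>
    ((hk1.differentiable (by norm_num) (t - t0)).hasDerivAt).comp_sub_const t t0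
  have Kd : deriv K = fun t => Real.exp (κ * t) * (κ * k (t - t0) + deriv k (t - t0)) := by
    funext t
    refine ((E1 t).mul (kd t)).deriv.trans ?_; ring
  have Kdd : ∀ t, deriv (deriv K) t = Real.exp (κ * t) * (κ ^ 2 * k (t - t0) +
      2 * κ * deriv k (t - t0) + deriv (deriv k) (t - t0)) := by
    intro t
    rw [Kd]
    refine ((E1 t).mul (((kd t).const_mul κ).add (kdd t))).deriv.trans ?_
    simp only [Pi.add_apply]; ring
  have Kcd : ContDiff ℝ 2 K := by
    refine ContDiff.mul (by fun_prop) (hk.comp (by fun_prop))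
  have cK : ContDiffAt ℝ 2 (fun y => K (τ y)) x := Kcd.contDiffAt.comp x hτ
  have cF : ContDiffAt ℝ 2 (fun y => F (Φ y)) x := hF.contDiffAt.comp x hΦ
  have d {f : Euc N → ℝ} (hf : ContDiffAt ℝ 2 f x) : DifferentiableAt ℝ f x :=
    hf.differentiableAt (by norm_num)
  have cψ : ContDiffAt ℝ 2 (fun y => K (τ y) * F (Φ y)) x := cK.mul cF
  refine ⟨cψ, ?_⟩
  change _ ≤ lap N (fun y => K (τ y) * F (Φ y)) x + _
  rw [lap_eq cψ]
  have e : ∀ i, pd N i (pd N i (fun y => K (τ y) * F (Φ y))) x =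
      K (τ x) * deriv (deriv F) (Φ x) * pd N i Φ x ^ 2 +
      K (τ x) * deriv F (Φ x) * pd N i (pd N i Φ) x +
      2 * deriv K (τ x) * deriv F (Φ x) * (pd N i τ x * pd N i Φ x) +
      F (Φ x) * deriv (deriv K) (τ x) * pd N i τ x ^ 2 +
      F (Φ x) * deriv K (τ x) * pd N i (pd N i τ) x := fun i => by
    rw [pd2_mul cK cF, pd2_comp Kcd.contDiffAt hτ, pd2_comp hF.contDiffAt hΦ,
      pd_comp (Kcd.differentiable (by norm_num) _) (d hτ),
      pd_comp (hF.differentiable (by norm_num) _) (d hΦ)]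
    ring
  simp_rw [e]
  rw [Finset.sum_add_distrib, Finset.sum_add_distrib, Finset.sum_add_distrib,
    Finset.sum_add_distrib, ← Finset.mul_sum, ← Finset.mul_sum, ← Finset.mul_sum,
    ← Finset.mul_sum, ← Finset.mul_sum, h1, h2, h3, h4, Kdd, Kd]
  have pos : 0 ≤ K (τ x) * deriv (deriv F) (Φ x) * ∑ i, pd N i Φ x ^ 2 :=
    mul_nonneg (mul_nonneg (mul_nonneg (Real.exp_pos _).le k0) F2)
      (Finset.sum_nonneg fun i _ => sq_nonneg _)
  refine le_trans (le_of_eq ?_) (add_le_add_left (add_le_add_left (add_le_add_left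
    (add_le_add_left (add_le_add_left pos _) _) _) _) _)
  simp only [hK]
  linear_combination
    (-R * Real.exp (κ * τ x) * k (τ x - t0) * F (Φ x)) * hκ -
    (R * Real.exp (κ * τ x) * deriv k (τ x - t0) * F (Φ x)) * hβ


/-! ### The cone -/

lemma dir_continuousOn {N : ℕ} : ContinuousOn (fun x : Euc N => ‖x‖⁻¹ • x) {x | x ≠ 0} := by
  refine ContinuousOn.smul (ContinuousOn.inv₀ continuous_norm.continuousOn ?_) continuousOn_id
  intro x hx; exact norm_ne_zero_iff.2 hx

lemma isOpen_cone {N : ℕ} {Ω : Set (Euc N)} (hΩ : IsConeDomain N Ω) : IsOpen (cone N Ω) := by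
  obtain ⟨V, hV, hVΩ⟩ := isOpen_induced_iff.1 hΩ.2.2
  have key : ∀ x : Euc N, x ≠ 0 → (‖x‖⁻¹ • x ∈ Ω ↔ ‖x‖⁻¹ • x ∈ V) := by
    intro x hx
    have hs : ‖x‖⁻¹ • x ∈ Metric.sphere (0 : Euc N) 1 := by
      simp [norm_smul, norm_ne_zero_iff.2 hx]
    have := Set.ext_iff.1 hVΩ ⟨_, hs⟩
    exact this.symm
  have : cone N Ω = {x | x ≠ 0} ∩ (fun x : Euc N => ‖x‖⁻¹ • x) ⁻¹' V := by
    ext x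
    constructor
    · rintro ⟨h1, h2⟩; exact ⟨h1, (key x h1).1 h2⟩
    · rintro ⟨h1, h2⟩; exact ⟨h1, (key x h1).2 h2⟩
  rw [this]
  exact dir_continuousOn.isOpen_inter_preimage isOpen_ne hV

lemma coneGT_sub_cone {N : ℕ} {Ω : Set (Euc N)} {ρ : ℝ} (hρ : 0 < ρ) :
    coneGT N ρ Ω ⊆ cone N Ω := fun x hx =>
  ⟨norm_pos_iff.1 (hρ.trans hx.1), hx.2⟩

lemma isOpen_coneGT {N : ℕ} {Ω : Set (Euc N)} (hΩ : IsConeDomain N Ω) {ρ : ℝ} (hρ : 0 < ρ) :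
    IsOpen (coneGT N ρ Ω) := by
  have : coneGT N ρ Ω = cone N Ω ∩ {x | ρ < ‖x‖} := by
    ext x
    constructor
    · intro h; exact ⟨coneGT_sub_cone hρ h, h.1⟩
    · rintro ⟨h1, h2⟩; exact ⟨h2, h1.2⟩
  rw [this]
  exact (isOpen_cone hΩ).inter (isOpen_lt continuous_const continuous_norm)

lemma rpow_neg_two_eq {N : ℕ} (x : Euc N) : ‖x‖ ^ (-(2:ℝ)) = (‖x‖ ^ 2)⁻¹ := by
  rw [Real.rpow_neg (norm_nonneg _)]; norm_cast

/-- Truncated cone. -/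
def shell (N : ℕ) (Ω : Set (Euc N)) (t0 L : ℝ) : Set (Euc N) :=
  cone N Ω ∩ {x | t0 ≤ Real.log ‖x‖ ∧ Real.log ‖x‖ ≤ t0 + L}

lemma shell_iff {N : ℕ} {x : Euc N} (hx : x ≠ 0) {t0 L : ℝ} :
    (t0 ≤ Real.log ‖x‖ ∧ Real.log ‖x‖ ≤ t0 + L) ↔
      (Real.exp t0 ≤ ‖x‖ ∧ ‖x‖ ≤ Real.exp (t0 + L)) := by
  have := norm_pos_iff.2 hx
  rw [Real.le_log_iff_exp_le this, Real.log_le_iff_le_exp this]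

lemma shell_eq {N : ℕ} {Ω : Set (Euc N)} {t0 L : ℝ} : shell N Ω t0 L =
    cone N Ω ∩ {x | Real.exp t0 ≤ ‖x‖ ∧ ‖x‖ ≤ Real.exp (t0 + L)} := by
  ext x
  constructor
  · rintro ⟨h1, h2⟩; exact ⟨h1, (shell_iff h1.1).1 h2⟩
  · rintro ⟨h1, h2⟩; exact ⟨h1, (shell_iff h1.1).2 h2⟩

lemma shell_meas {N : ℕ} {Ω : Set (Euc N)} (hΩ : IsConeDomain N Ω) {t0 L : ℝ} :
    MeasurableSet (shell N Ω t0 L) := by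
  rw [shell_eq]
  refine (isOpen_cone hΩ).measurableSet.inter (IsClosed.measurableSet ?_)
  exact (isClosed_le continuous_const continuous_norm).inter
    (isClosed_le continuous_norm continuous_const)

lemma shell_fin {N : ℕ} {Ω : Set (Euc N)} {t0 L : ℝ} : volume (shell N Ω t0 L) < ⊤ := by
  refine lt_of_le_of_lt (measure_mono (t := Metric.closedBall 0 (Real.exp (t0 + L))) ?_)
    measure_closedBall_lt_top
  rw [shell_eq]
  intro x hx
  simpa using hx.2.2

lemma shell_sub {N : ℕ} {Ω : Set (Euc N)} {t0 L ρ : ℝ} (hρt : ρ < Real.exp t0) :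
    shell N Ω t0 L ⊆ coneGT N ρ Ω := by
  rw [shell_eq]
  intro x hx
  exact ⟨hρt.trans_le hx.2.1, hx.1.2⟩

lemma phi_ge_compact {N : ℕ} {Ω : Set (Euc N)} {lam1 : ℝ} {φ : Euc N → ℝ}
    (hphi : DirichletEigenpair N Ω lam1 φ) (t0 L ε : ℝ) (hε : 0 < ε) :
    ∃ K : Set (Euc N), IsCompact K ∧ K ⊆ shell N Ω t0 L ∧
      ∀ x ∈ shell N Ω t0 L, ε ≤ φ (‖x‖⁻¹ • x) → x ∈ K := by
  set Z : Set (Euc N) := {x | Real.exp t0 ≤ ‖x‖ ∧ ‖x‖ ≤ Real.exp (t0 + L)}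
  have Zc : IsClosed Z := (isClosed_le continuous_const continuous_norm).inter
    (isClosed_le continuous_norm continuous_const)
  have Z0 : ∀ x ∈ Z, x ≠ 0 := fun x hx => norm_pos_iff.1 ((Real.exp_pos _).trans_le hx.1)
  have Cc : IsClosed (closure Ω ∩ φ ⁻¹' Set.Ici ε) :=
    hphi.contOn.preimage_isClosed_of_isClosed isClosed_closure isClosed_Ici
  have Kc : IsClosed (Z ∩ (fun x : Euc N => ‖x‖⁻¹ • x) ⁻¹' (closure Ω ∩ φ ⁻¹' Set.Ici ε)) :=
    (dir_continuousOn.mono Z0).preimage_isClosed_of_isClosed Zc Cc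
  refine ⟨_, (isCompact_closedBall (0 : Euc N) (Real.exp (t0 + L))).of_isClosed_subset Kc ?_,
    ?_, ?_⟩
  · intro x hx; simpa using hx.1.2
  · intro x hx
    rw [shell_eq]
    refine ⟨⟨Z0 x hx.1, ?_⟩, hx.1⟩
    by_contra hn
    have h0 := hphi.bdryZero _ ⟨hx.2.1, hn⟩
    have h1 : ε ≤ φ (‖x‖⁻¹ • x) := hx.2.2
    linarith
  · intro x hx h
    rw [shell_eq] at hx
    exact ⟨hx.2, subset_closure hx.1.2, h⟩

/-- The supersolution `v = u^a (|x|^γ Φ)^{1-a}`. -/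
def vfun (N : ℕ) (a γ : ℝ) (φ u : Euc N → ℝ) (y : Euc N) : ℝ :=
  Real.exp (a * Real.log (u y) + (1 - a) * (γ * Real.log ‖y‖ + Real.log (φ (‖y‖⁻¹ • y))))

lemma weak_ineq {N : ℕ} {Ω : Set (Euc N)} (hΩ : IsConeDomain N Ω)
    {lam1 : ℝ} {φ : Euc N → ℝ} (hphi : DirichletEigenpair N Ω lam1 φ)
    {ρ μ γ κ β a t0 L : ℝ} {u : Euc N → ℝ} (hρ : 0 < ρ)
    (hu : ContDiffOn ℝ 2 u (coneGT N ρ Ω)) (huc : ContinuousOn u (closure (coneGT N ρ Ω)))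
    (u0 : ∀ x ∈ coneGT N ρ Ω, 0 < u x)
    (hlap : ∀ x ∈ coneGT N ρ Ω, lap N u x ≤ -μ * (‖x‖ ^ 2)⁻¹ * u x)
    (hγ : γ * (γ + ((N : ℝ) - 2)) = lam1 - μ) (hκ : κ * (κ + ((N : ℝ) - 2)) = lam1 - μ)
    (hβ : 2 * κ + ((N : ℝ) - 2) = β)
    (a0 : 0 ≤ a) (a1 : a ≤ 1) (hρt : ρ < Real.exp t0)
    {k : ℝ → ℝ} (hk : ContDiff ℝ 2 k) (k0 : ∀ τ, 0 ≤ k τ) (kl : ∀ τ, τ ≤ 0 → k τ = 0)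
    (kr : ∀ τ, L ≤ τ → k τ = 0) :
    ContinuousOn (fun x => vfun N a γ φ u x * ((‖x‖ ^ 2)⁻¹ * Real.exp (κ * Real.log ‖x‖)) *
      φ (‖x‖⁻¹ • x)) (shell N Ω t0 L) ∧
    (∃ B, ∀ x ∈ shell N Ω t0 L, |vfun N a γ φ u x * ((‖x‖ ^ 2)⁻¹ * Real.exp (κ * Real.log ‖x‖)) *
      φ (‖x‖⁻¹ • x)| ≤ B) ∧
    ∫ x in shell N Ω t0 L, (vfun N a γ φ u x * ((‖x‖ ^ 2)⁻¹ * Real.exp (κ * Real.log ‖x‖)) *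
      φ (‖x‖⁻¹ • x)) * (deriv (deriv k) (Real.log ‖x‖ - t0) + β * deriv k (Real.log ‖x‖ - t0))
      ≤ 0 := by
  set U := coneGT N ρ Ω with hUdef
  have hU : IsOpen U := isOpen_coneGT hΩ hρ
  have hC : IsOpen (cone N Ω) := isOpen_cone hΩ
  have hUC : U ⊆ cone N Ω := coneGT_sub_cone hρ
  set A := shell N Ω t0 L with hA
  have hAU : A ⊆ U := shell_sub hρt
  set Φ : Euc N → ℝ := fun y => φ (‖y‖⁻¹ • y) with hΦ
  set τ : Euc N → ℝ := fun y => Real.log ‖y‖ with hτ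
  have cΦ : ∀ x ∈ cone N Ω, ContDiffAt ℝ 2 Φ x := fun x hx =>
    hphi.smoothExt.contDiffAt (hC.mem_nhds hx)
  have cτ : ∀ x ∈ cone N Ω, ContDiffAt ℝ 2 τ x := fun x hx => logn_contDiffAt hx.1
  have Φ0 : ∀ x ∈ cone N Ω, 0 < Φ x := fun x hx => hphi.pos _ hx.2
  have Φ1 : ∀ x ∈ cone N Ω, Φ x ≤ 1 := fun x hx => hphi.le_one _ (subset_closure hx.2)
  have s1 : ∀ x ∈ cone N Ω, ∑ i, pd N i τ x ^ 2 = (‖x‖ ^ 2)⁻¹ := fun x hx => sum_pd_logn_sq hx.1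
  have s2 : ∀ x ∈ cone N Ω, ∑ i, pd N i (pd N i τ) x = ((N : ℝ) - 2) * (‖x‖ ^ 2)⁻¹ :=
    fun x hx => sum_pd2_logn hx.1
  have s3 : ∀ x ∈ cone N Ω, ∑ i, pd N i τ x * pd N i Φ x = 0 :=
    fun x hx => sum_pd_logn_mul hx.1 ((cΦ x hx).differentiableAt (by norm_num))
  have s4 : ∀ x ∈ cone N Ω, ∑ i, pd N i (pd N i Φ) x = -lam1 * (‖x‖ ^ 2)⁻¹ * Φ x :=
    fun x hx => by
      rw [← lap_eq (cΦ x hx), ← rpow_neg_two_eq]; exact hphi.eigen x hx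
  set v := vfun N a γ φ u with hv
  have hsup : ∀ x ∈ U, ContDiffAt ℝ 2 v x ∧ lap N v x ≤ -μ * (‖x‖ ^ 2)⁻¹ * v x := by
    intro x hx
    have cu := hu.contDiffAt (hU.mem_nhds hx)
    have hxC := hUC hx
    exact super_v cu (cτ x hxC) (cΦ x hxC) (u0 x hx) (Φ0 x hxC) (s1 x hxC) (s2 x hxC) (s3 x hxC)
      (s4 x hxC) (by rw [← lap_eq cu]; exact hlap x hx) hγ a0 a1
  have vpos : ∀ x, 0 < v x := fun x => Real.exp_pos _
  have vcd : ContDiffOn ℝ 2 v U := fun x hx => (hsup x hx).1.contDiffWithinAt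
  have τcont : ContinuousOn τ U := fun x hx => (cτ x (hUC hx)).continuousAt.continuousWithinAt
  have Φcont : ContinuousOn Φ U := fun x hx => (cΦ x (hUC hx)).continuousAt.continuousWithinAt
  have ncont : ContinuousOn (fun x : Euc N => (‖x‖ ^ 2)⁻¹) U := by
    refine ContinuousOn.inv₀ (by fun_prop) fun x hx => ?_
    exact pow_ne_zero _ (norm_ne_zero_iff.2 (hUC hx).1)
  set W : Euc N → ℝ := fun x => v x * ((‖x‖ ^ 2)⁻¹ * Real.exp (κ * τ x)) with hW
  have Wcont : ContinuousOn W U := vcd.continuousOn.mul (ncont.mul (by fun_prop))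
  have W0 : ∀ x, 0 ≤ W x := fun x => by
    have := vpos x
    simp only [hW]; positivity
  -- boundedness of `W` on `A`
  obtain ⟨BW, hBW⟩ : ∃ B, ∀ x ∈ A, W x ≤ B := by
    have hcomp : IsCompact (closure U ∩ Metric.closedBall 0 (Real.exp (t0 + L))) :=
      (isCompact_closedBall _ _).inter_left isClosed_closure
    obtain ⟨M, hM⟩ := hcomp.exists_bound_of_continuousOn (huc.mono Set.inter_subset_left)
    refine ⟨Real.exp (Real.log (max M 1) + |γ| * (|t0| + |t0 + L|)) *
      (((Real.exp t0) ^ 2)⁻¹ * Real.exp (|κ| * (|t0| + |t0 + L|))), fun x hx => ?_⟩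
    have hxU := hAU hx
    have hxC := hUC hxU
    have hτx : |τ x| ≤ |t0| + |t0 + L| := by
      have h2 : t0 ≤ τ x ∧ τ x ≤ t0 + L := hx.2
      rw [abs_le]
      constructor
      · linarith [neg_abs_le t0, abs_nonneg (t0 + L)]
      · linarith [le_abs_self (t0 + L), abs_nonneg t0]
    have hx' := hx
    rw [hA, shell_eq] at hx'
    have hux : u x ≤ max M 1 := by
      refine le_trans (le_trans (le_abs_self _) (hM x ⟨subset_closure hxU, ?_⟩)) (le_max_left _ _)
      simpa using hx'.2.2
    have l1 : a * Real.log (u x) ≤ Real.log (max M 1) := by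
      have h1 : Real.log (u x) ≤ Real.log (max M 1) := Real.log_le_log (u0 x hxU) hux
      have h2 : 0 ≤ Real.log (max M 1) := Real.log_nonneg (le_max_right _ _)
      nlinarith
    have mulabs : ∀ c : ℝ, c * τ x ≤ |c| * (|t0| + |t0 + L|) := fun c => by
      refine (le_abs_self _).trans ?_
      rw [abs_mul]; gcongr
    have l2 : (1 - a) * (γ * τ x + Real.log (Φ x)) ≤ |γ| * (|t0| + |t0 + L|) := by
      have h1 : Real.log (Φ x) ≤ 0 := Real.log_nonpos (Φ0 x hxC).le (Φ1 x hxC)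
      have h2 := mulabs γ
      have h3 : 0 ≤ |γ| * (|t0| + |t0 + L|) := by positivity
      nlinarith
    have l3 : v x ≤ Real.exp (Real.log (max M 1) + |γ| * (|t0| + |t0 + L|)) :=
      Real.exp_le_exp.2 (add_le_add l1 l2)
    have l4 : (‖x‖ ^ 2)⁻¹ ≤ ((Real.exp t0) ^ 2)⁻¹ := by
      have := hx'.2.1
      gcongr
    have l5 : Real.exp (κ * τ x) ≤ Real.exp (|κ| * (|t0| + |t0 + L|)) :=
      Real.exp_le_exp.2 (mulabs κ)
    simp only [hW]
    gcongr
  have A_meas : MeasurableSet A := shell_meas hΩ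
  have A_fin : volume A < ⊤ := shell_fin
  have BW0 : ∀ x ∈ A, 0 ≤ BW := fun x hx => (W0 x).trans (hBW x hx)
  have G1 : ContinuousOn (fun x => W x * Φ x) A := (Wcont.mul Φcont).mono hAU
  have G2 : ∀ x ∈ A, |W x * Φ x| ≤ BW := fun x hx => by
    have hxC := hUC (hAU hx)
    rw [abs_of_nonneg (mul_nonneg (W0 x) (Φ0 x hxC).le)]
    exact (mul_le_of_le_one_right (W0 x) (Φ1 x hxC)).trans (hBW x hx)
  refine ⟨G1, ⟨BW, G2⟩, ?_⟩
  set q : ℝ → ℝ := fun t => deriv (deriv k) t + β * deriv k t with hq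
  have hk1 : ContDiff ℝ 1 (deriv k) := by
    rw [show (2 : WithTop ℕ∞) = 1 + 1 by norm_num, contDiff_succ_iff_deriv] at hk
    exact hk.2.2
  have qcont : Continuous q :=
    (hk1.continuous_deriv le_rfl).add (continuous_const.mul hk1.continuous)
  obtain ⟨Bq, hBq⟩ := (isCompact_Icc (a := (0:ℝ)) (b := L)).exists_bound_of_continuousOn
    qcont.continuousOn
  obtain ⟨Bk, hBk⟩ := (isCompact_Icc (a := (0:ℝ)) (b := L)).exists_bound_of_continuousOn
    hk.continuous.continuousOn
  have tmem : ∀ x ∈ A, τ x - t0 ∈ Set.Icc 0 L := fun x hx => by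
    have h2 : t0 ≤ τ x ∧ τ x ≤ t0 + L := hx.2
    exact ⟨by linarith [h2.1], by linarith [h2.2]⟩
  have I0 : IntegrableOn (fun x => (W x * Φ x) * q (τ x - t0)) A := by
    have hcont : ContinuousOn (fun x => (W x * Φ x) * q (τ x - t0)) A :=
      G1.mul (qcont.comp_continuousOn ((τcont.mono hAU).sub continuousOn_const))
    refine IntegrableOn.of_bound A_fin (hcont.aestronglyMeasurable A_meas) (BW * Bq) ?_
    · refine (ae_restrict_iff' A_meas).2 (Eventually.of_forall fun x hx => ?_)
      rw [norm_mul]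
      exact mul_le_mul (G2 x hx) (hBq _ (tmem x hx)) (norm_nonneg _) (BW0 x hx)
  change ∫ x in A, (W x * Φ x) * q (τ x - t0) ≤ 0
  -- the estimate with parameter ε
  set B' := 2 * BW * (Bq + |lam1| * Bk) with hB'
  have main : ∀ ε : ℝ, 0 < ε →
      ∫ x in A, (W x * Φ x) * q (τ x - t0) ≤ ε * (B' * volume.real A) := by
    intro ε hε
    obtain ⟨F, Fcd, F0, Fdd, Fge, Fle, Fnn, Ferr⟩ := exists_F ε hε
    obtain ⟨K, Kc, KA, hK⟩ := phi_ge_compact hphi t0 L ε hε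
    set ψ0 : Euc N → ℝ := fun y => (Real.exp (κ * τ y) * k (τ y - t0)) * F (Φ y) with hψ0
    classical
    set ψ : Euc N → ℝ := fun y => if y ∈ cone N Ω then ψ0 y else 0 with hψ
    have ψK : ∀ y, y ∉ K → ψ y = 0 := by
      intro y hy
      by_cases hyC : y ∈ cone N Ω
      · simp only [hψ, hyC, if_true, hψ0]
        by_cases h1 : τ y ≤ t0
        · rw [kl _ (by linarith)]; ring
        by_cases h2 : t0 + L ≤ τ y
        · rw [kr _ (by linarith)]; ring
        have hyA : y ∈ A := ⟨hyC, (not_le.1 h1).le, (not_le.1 h2).le⟩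
        have : ¬ ε ≤ Φ y := fun h => hy (hK y hyA h)
        rw [F0 _ (not_le.1 this).le]; ring
      · simp [hψ, hyC]
    have ψ_eq : ∀ x ∈ cone N Ω, ψ =ᶠ[𝓝 x] ψ0 := fun x hx => by
      filter_upwards [hC.mem_nhds hx] with y hy
      simp [hψ, hy]
    have hsub := fun x (hx : x ∈ cone N Ω) => sub_psi (t0 := t0) (cτ x hx) (cΦ x hx) hk Fcd (s1 x hx) (s2 x hx)
      (s3 x hx) (s4 x hx) hκ hβ (k0 _) (Fdd _)
    have ψcd : ContDiff ℝ 2 ψ := contDiff_iff_contDiffAt.2 fun x => by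
      by_cases hx : x ∈ K
      · have hxC := hUC (hAU (KA hx))
        exact (hsub x hxC).1.congr_of_eventuallyEq (ψ_eq x hxC)
      · have : ψ =ᶠ[𝓝 x] fun _ => 0 := by
          filter_upwards [Kc.isClosed.isOpen_compl.mem_nhds hx] with y hy using ψK y hy
        exact contDiffAt_const.congr_of_eventuallyEq this
    have ψsupp : tsupport ψ ⊆ K := closure_minimal (fun y hy => by
      by_contra h; exact hy (ψK y h)) Kc.isClosed
    have ψcs : HasCompactSupport ψ := Kc.of_isClosed_subset (isClosed_tsupport _) ψsupp
    have ψU : tsupport ψ ⊆ U := ψsupp.trans (KA.trans hAU)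
    have ψnn : ∀ x, 0 ≤ ψ x := fun x => by
      simp only [hψ]
      split_ifs
      · exact mul_nonneg (mul_nonneg (Real.exp_pos _).le (k0 _)) (Fnn _)
      · exact le_rfl
    obtain ⟨i1, i2, i3⟩ := ibp_lap hU vcd ψcd ψcs ψU
    have i4 : Integrable (fun x => (μ * (‖x‖ ^ 2)⁻¹ * v x) * ψ x) :=
      integrable_mul_of_tsupport hU ((continuousOn_const.mul ncont).mul vcd.continuousOn)
        ψcd.continuous ψcs ψU
    have neg : ∫ x, (v x * lap N ψ x + (μ * (‖x‖ ^ 2)⁻¹ * v x) * ψ x) ≤ 0 := by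
      rw [integral_add i1 i4, i3, ← integral_add i2 i4]
      refine integral_nonpos fun x => ?_
      by_cases hx : x ∈ U
      · have h1 := (hsup x hx).2
        have h2 := ψnn x
        simp only [Pi.zero_apply]
        nlinarith
      · have : ψ x = 0 := image_eq_zero_of_notMem_tsupport fun h => hx (ψU h)
        simp [this]
    have off : ∀ x, x ∉ A → v x * lap N ψ x + (μ * (‖x‖ ^ 2)⁻¹ * v x) * ψ x = 0 := by
      intro x hx
      have hxK : x ∉ K := fun h => hx (KA h)
      have : ψ =ᶠ[𝓝 x] fun _ => 0 := by
        filter_upwards [Kc.isClosed.isOpen_compl.mem_nhds hxK] with y hy using ψK y hy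
      rw [lap_congr this, ψK x hxK]
      have : lap N (fun _ : Euc N => (0:ℝ)) x = 0 := by
        unfold lap
        simp [iteratedFDeriv_const_of_ne]
      rw [this]; ring
    rw [← setIntegral_eq_integral_of_forall_compl_eq_zero off] at neg
    have ptw : ∀ x ∈ A, (W x * Φ x) * q (τ x - t0) ≤
        (v x * lap N ψ x + (μ * (‖x‖ ^ 2)⁻¹ * v x) * ψ x) + ε * B' := by
      intro x hx
      have hxC := hUC (hAU hx)
      have h1 := (hsub x hxC).2
      rw [lap_congr (ψ_eq x hxC), (ψ_eq x hxC).eq_of_nhds]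
      have h2 := mul_le_mul_of_nonneg_left h1 (vpos x).le
      have e1 : v x * lap N ψ0 x + (μ * (‖x‖ ^ 2)⁻¹ * v x) * ψ0 x = v x * (lap N ψ0 x +
        μ * (‖x‖ ^ 2)⁻¹ * ψ0 x) := by ring
      rw [e1]
      refine le_trans ?_ (add_le_add_left h2 _)
      have e2 : v x * ((‖x‖ ^ 2)⁻¹ * Real.exp (κ * τ x) * ((deriv (deriv k) (τ x - t0) +
        β * deriv k (τ x - t0)) * F (Φ x) + lam1 * k (τ x - t0) * (F (Φ x) - Φ x * deriv F (Φ x))))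
        = W x * (q (τ x - t0) * F (Φ x) +
          lam1 * k (τ x - t0) * (F (Φ x) - Φ x * deriv F (Φ x))) := by
        simp only [hW, hq]; ring
      rw [e2]
      have p0 := (Φ0 x hxC).le
      have b1 : |q (τ x - t0) * (Φ x - F (Φ x))| ≤ Bq * (2 * ε) := by
        rw [abs_mul]
        refine mul_le_mul (hBq _ (tmem x hx)) ?_ (abs_nonneg _)
          ((norm_nonneg _).trans (hBq _ (tmem x hx)))
        rw [abs_of_nonneg (by linarith [Fle _ p0])]
        linarith [Fge _ p0]
      have b2 : |lam1 * k (τ x - t0) * (F (Φ x) - Φ x * deriv F (Φ x))| ≤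
          (|lam1| * Bk) * (2 * ε) := by
        rw [abs_mul, abs_mul]
        have hbk : |k (τ x - t0)| ≤ Bk := hBk _ (tmem x hx)
        have := Ferr _ p0
        have : 0 ≤ Bk := (abs_nonneg _).trans hbk
        gcongr
      have hd : q (τ x - t0) * Φ x - (q (τ x - t0) * F (Φ x) +
          lam1 * k (τ x - t0) * (F (Φ x) - Φ x * deriv F (Φ x))) ≤ 2 * ε * (Bq + |lam1| * Bk) := by
        have := le_abs_self (q (τ x - t0) * (Φ x - F (Φ x)))
        have := neg_abs_le (lam1 * k (τ x - t0) * (F (Φ x) - Φ x * deriv F (Φ x)))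
        linarith
      have hpos : 0 ≤ 2 * ε * (Bq + |lam1| * Bk) := by
        have : 0 ≤ Bq := (norm_nonneg _).trans (hBq _ (tmem x hx))
        have : 0 ≤ Bk := (norm_nonneg _).trans (hBk _ (tmem x hx))
        positivity
      have h5 : W x * (q (τ x - t0) * Φ x - (q (τ x - t0) * F (Φ x) +
          lam1 * k (τ x - t0) * (F (Φ x) - Φ x * deriv F (Φ x)))) ≤
          BW * (2 * ε * (Bq + |lam1| * Bk)) :=
        (mul_le_mul_of_nonneg_left hd (W0 x)).trans (mul_le_mul_of_nonneg_right (hBW x hx) hpos)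
      rw [hB']
      linarith
    have i5 : IntegrableOn (fun x => v x * lap N ψ x + (μ * (‖x‖ ^ 2)⁻¹ * v x) * ψ x) A :=
      (i1.add i4).integrableOn
    have i6 : IntegrableOn (fun _ : Euc N => ε * B') A := integrableOn_const A_fin.ne
    refine (setIntegral_mono_on I0 (i5.add i6) A_meas ptw).trans ?_
    have := integral_add i5 i6
    simp only [Pi.add_apply] at this ⊢
    rw [this, setIntegral_const]
    simp only [smul_eq_mul]
    linarith
  by_contra hcon
  rw [not_le] at hcon
  set X := ∫ x in A, (W x * Φ x) * q (τ x - t0)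
  set D := B' * volume.real A
  have h1 := main (X / (2 * (|D| + 1))) (by positivity)
  have h2 : X / (2 * (|D| + 1)) * D ≤ X / (2 * (|D| + 1)) * (|D| + 1) := by
    gcongr; linarith [le_abs_self D]
  have h3 : X / (2 * (|D| + 1)) * (|D| + 1) = X / 2 := by
    have : |D| + 1 ≠ 0 := by positivity
    field_simp
  linarith


/-! ### Integral estimates and conclusion -/

lemma log_cont_shell {N : ℕ} {Ω : Set (Euc N)} {t0 L : ℝ} :
    ContinuousOn (fun x : Euc N => Real.log ‖x‖ - t0) (shell N Ω t0 L) := by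
  refine ContinuousOn.sub (ContinuousOn.log continuous_norm.continuousOn ?_) continuousOn_const
  intro x hx
  exact norm_ne_zero_iff.2 hx.1.1

lemma integ_shell {N : ℕ} {Ω : Set (Euc N)} (hΩ : IsConeDomain N Ω) {t0 L : ℝ} {w : Euc N → ℝ}
    (hw : ContinuousOn w (shell N Ω t0 L)) (hB : ∃ B, ∀ x ∈ shell N Ω t0 L, |w x| ≤ B)
    {q : ℝ → ℝ} (hq : Continuous q) :
    IntegrableOn (fun x => w x * q (Real.log ‖x‖ - t0)) (shell N Ω t0 L) := by
  obtain ⟨B, hB⟩ := hB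
  obtain ⟨Bq, hBq⟩ := (isCompact_Icc (a := (0:ℝ)) (b := L)).exists_bound_of_continuousOn
    hq.continuousOn
  have hcont : ContinuousOn (fun x => w x * q (Real.log ‖x‖ - t0)) (shell N Ω t0 L) :=
    hw.mul (hq.comp_continuousOn log_cont_shell)
  refine IntegrableOn.of_bound shell_fin (hcont.aestronglyMeasurable (shell_meas hΩ)) (B * Bq) ?_
  refine (ae_restrict_iff' (shell_meas hΩ)).2 (Eventually.of_forall fun x hx => ?_)
  rw [norm_mul]
  have h2 : t0 ≤ Real.log ‖x‖ ∧ Real.log ‖x‖ ≤ t0 + L := hx.2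
  have h3 : Real.log ‖x‖ - t0 ∈ Set.Icc 0 L := ⟨by linarith [h2.1], by linarith [h2.2]⟩
  exact mul_le_mul (hB x hx) (hBq _ h3) (norm_nonneg _) ((abs_nonneg _).trans (hB x hx))

lemma ring_int {N : ℕ} (hN : 1 ≤ N) {Ω : Set (Euc N)} (hΩ : IsConeDomain N Ω) (t0 : ℝ) :
    ∃ C1 : ℝ, 0 ≤ C1 ∧ ∀ L, 0 ≤ L →
      IntegrableOn (fun x : Euc N => (‖x‖ ^ N)⁻¹) (shell N Ω t0 L) ∧
      ∫ x in shell N Ω t0 L, (‖x‖ ^ N)⁻¹ ≤ C1 * L := by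
  have : Nontrivial (Euc N) := by
    have : Nonempty (Fin N) := ⟨⟨0, hN⟩⟩
    infer_instance
  refine ⟨N * volume.real (Metric.ball (0 : Euc N) 1), by positivity, fun L hL => ?_⟩
  set a := Real.exp t0 with ha
  set b := Real.exp (t0 + L) with hb
  have a0 : 0 < a := Real.exp_pos _
  have hab : a ≤ b := Real.exp_le_exp.2 (by linarith)
  set f : ℝ → ℝ := (Set.Icc a b).indicator (fun y => (y ^ N)⁻¹) with hf
  have hfin : Module.finrank ℝ (Euc N) = N := by simp
  have e0 : ∀ y ∈ Set.Ioi (0:ℝ), y ^ (N - 1) • f y = (Set.Icc a b).indicator (fun y => y⁻¹) y := by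
    intro y hy
    have hy : (0:ℝ) < y := hy
    by_cases h : y ∈ Set.Icc a b
    · simp only [hf, Set.indicator_of_mem h, smul_eq_mul]
      have : y ^ N = y ^ (N - 1) * y := by rw [← pow_succ]; congr 1; omega
      rw [this]; field_simp
    · simp only [hf, Set.indicator_of_notMem h, smul_eq_mul, mul_zero]
  have hci : ContinuousOn (fun y : ℝ => y⁻¹) (Set.Icc a b) :=
    continuousOn_inv₀.mono fun y hy => (a0.trans_le hy.1).ne'
  have hint : IntegrableOn (fun y : ℝ => y⁻¹) (Set.Icc a b) := hci.integrableOn_Icc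
  have hI : Integrable (fun x : Euc N => f ‖x‖) := by
    rw [integrable_fun_norm_addHaar volume (f := f), hfin]
    refine (integrableOn_congr_fun e0 measurableSet_Ioi).2 ?_
    exact ((integrable_indicator_iff measurableSet_Icc).2 hint).integrableOn
  have hsub : Set.Ioi (0:ℝ) ∩ Set.Icc a b = Set.Icc a b :=
    Set.inter_eq_self_of_subset_right fun y hy => a0.trans_le hy.1
  have hv : ∫ x : Euc N, f ‖x‖ = N * volume.real (Metric.ball (0 : Euc N) 1) * L := by
    rw [integral_fun_norm_addHaar volume f, hfin, setIntegral_congr_fun measurableSet_Ioi e0,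
      setIntegral_indicator measurableSet_Icc, hsub, integral_Icc_eq_integral_Ioc,
      ← intervalIntegral.integral_of_le hab, integral_inv_of_pos a0 (a0.trans_le hab)]
    rw [ha, hb, ← Real.exp_sub, Real.log_exp]
    simp only [nsmul_eq_mul, smul_eq_mul]; ring
  have eqs : Set.EqOn (fun x : Euc N => f ‖x‖) (fun x => (‖x‖ ^ N)⁻¹) (shell N Ω t0 L) := by
    intro x hx
    rw [shell_eq] at hx
    have : ‖x‖ ∈ Set.Icc a b := hx.2
    simp only [hf, Set.indicator_of_mem this]
  refine ⟨(integrableOn_congr_fun eqs (shell_meas hΩ)).1 hI.integrableOn, ?_⟩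
  rw [← setIntegral_congr_fun (shell_meas hΩ) eqs, ← hv]
  refine setIntegral_le_integral hI (Eventually.of_forall fun x => ?_)
  refine Set.indicator_nonneg (fun y hy => ?_) _
  have := a0.trans_le hy.1
  positivity

lemma riesz_int {N : ℕ} {Ω : Set (Euc N)} (hΩ : IsConeDomain N Ω) {ρ α p : ℝ} (hρ : 0 < ρ)
    (hα : 0 ≤ α) {u : Euc N → ℝ}
    (hu : ContinuousOn u (coneGT N ρ Ω)) (u0 : ∀ x ∈ coneGT N ρ Ω, 0 < u x) {x0 : Euc N}
    (hfin : rieszConv N α ρ Ω (fun y => u y ^ p) x0 < ⊤) :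
    IntegrableOn (fun y => u y ^ p * ‖y‖ ^ (-α)) (coneGT N ρ Ω ∩ {y | ‖x0‖ < ‖y‖}) := by
  set S := coneGT N ρ Ω ∩ {y | ‖x0‖ < ‖y‖} with hS
  have hSm : MeasurableSet S := ((isOpen_coneGT hΩ hρ).inter
    (isOpen_lt continuous_const continuous_norm)).measurableSet
  have hc : ContinuousOn (fun y => u y ^ p * ‖y‖ ^ (-α)) S := by
    refine ContinuousOn.mul ?_ ?_
    · exact (hu.mono Set.inter_subset_left).rpow_const fun y hy => Or.inl (u0 y hy.1).ne'
    · exact continuous_norm.continuousOn.rpow_const fun y hy => Or.inl (hρ.trans hy.1.1).ne'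
  refine ⟨hc.aestronglyMeasurable hSm, ?_⟩
  rw [hasFiniteIntegral_iff_ofReal]
  · have hb : ∫⁻ y in S, ENNReal.ofReal (u y ^ p * ‖y‖ ^ (-α)) ≤
        ∫⁻ y in S, ENNReal.ofReal (2 ^ α) * ENNReal.ofReal (u y ^ p * ‖x0 - y‖ ^ (-α)) := by
      refine setLIntegral_mono' hSm fun y hy => ?_
      rw [← ENNReal.ofReal_mul (by positivity)]
      refine ENNReal.ofReal_le_ofReal ?_
      have up : 0 ≤ u y ^ p := Real.rpow_nonneg (u0 y hy.1).le _
      have hy2 : ‖x0‖ < ‖y‖ := hy.2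
      have y0 : 0 < ‖y‖ := hρ.trans hy.1.1
      have d0 : 0 < ‖x0 - y‖ := by
        rw [norm_pos_iff, sub_ne_zero]; rintro rfl; exact lt_irrefl _ hy2
      have d1 : ‖x0 - y‖ ≤ 2 * ‖y‖ := (norm_sub_le _ _).trans (by linarith)
      have h1 : (2 * ‖y‖) ^ (-α) ≤ ‖x0 - y‖ ^ (-α) :=
        Real.rpow_le_rpow_of_nonpos d0 d1 (by linarith)
      rw [Real.mul_rpow (by norm_num) y0.le] at h1
      have h2 : (2:ℝ) ^ α * 2 ^ (-α) = 1 := by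
        rw [← Real.rpow_add (by norm_num)]; simp
      have h3 : ‖y‖ ^ (-α) ≤ 2 ^ α * ‖x0 - y‖ ^ (-α) := by
        calc ‖y‖ ^ (-α) = 2 ^ α * (2 ^ (-α) * ‖y‖ ^ (-α)) := by rw [← mul_assoc, h2, one_mul]
          _ ≤ _ := by gcongr
      calc u y ^ p * ‖y‖ ^ (-α) ≤ u y ^ p * (2 ^ α * ‖x0 - y‖ ^ (-α)) := by gcongr
        _ = _ := by ring
    refine hb.trans_lt ?_
    rw [lintegral_const_mul' _ _ ENNReal.ofReal_ne_top]
    refine ENNReal.mul_lt_top ENNReal.ofReal_lt_top (lt_of_le_of_lt ?_ hfin)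
    exact lintegral_mono_set Set.inter_subset_left
  · refine (ae_restrict_iff' hSm).2 (Eventually.of_forall fun y hy => ?_)
    exact mul_nonneg (Real.rpow_nonneg (u0 y hy.1).le _) (Real.rpow_nonneg (norm_nonneg _) _)

lemma exp_young {a p δ y : ℝ} (ha : 0 < a) (hap : a ≤ p) (hδ : 0 < δ) :
    Real.exp (a * y) ≤ δ + Real.exp ((a - p) * (Real.log δ / a)) * Real.exp (p * y) := by
  by_cases h : a * y ≤ Real.log δ
  · have h1 : Real.exp (a * y) ≤ δ := by
      rw [← Real.exp_log hδ]; exact Real.exp_le_exp.2 h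
    have : 0 < Real.exp ((a - p) * (Real.log δ / a)) * Real.exp (p * y) := by positivity
    linarith
  · have h1 : Real.log δ / a ≤ y := by rw [div_le_iff₀ ha]; linarith
    have h2 : Real.exp (a * y) ≤ Real.exp ((a - p) * (Real.log δ / a)) * Real.exp (p * y) := by
      rw [← Real.exp_add]
      refine Real.exp_le_exp.2 ?_
      nlinarith
    linarith

lemma w_bound {N : ℕ} {φ u : Euc N → ℝ} {γ κ a p α δ : ℝ} {x : Euc N} (hx : 1 ≤ ‖x‖)
    (ux : 0 < u x) (f0 : 0 < φ (‖x‖⁻¹ • x)) (f1 : φ (‖x‖⁻¹ • x) ≤ 1)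
    (hκ : κ = -γ - ((N : ℝ) - 2)) (ha : 0 < a) (a1 : a ≤ 1) (hap : a ≤ p)
    (hcrit : p * (-γ) ≤ N - α) (hδ : 0 < δ) :
    vfun N a γ φ u x * ((‖x‖ ^ 2)⁻¹ * Real.exp (κ * Real.log ‖x‖)) * φ (‖x‖⁻¹ • x) ≤
      δ * (‖x‖ ^ N)⁻¹ + Real.exp ((a - p) * (Real.log δ / a)) * (u x ^ p * ‖x‖ ^ (-α)) := by
  have r0 : 0 < ‖x‖ := by linarith
  have l0 : 0 ≤ Real.log ‖x‖ := Real.log_nonneg hx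
  set l := Real.log ‖x‖ with hl
  set f := φ (‖x‖⁻¹ • x) with hf
  have e2 : (‖x‖ ^ 2)⁻¹ = Real.exp (-(2 * l)) := by
    rw [Real.exp_neg, two_mul, Real.exp_add, hl, Real.exp_log r0, sq]
  have eN : (‖x‖ ^ N)⁻¹ = Real.exp (-(N * l)) := by
    rw [Real.exp_neg, Real.exp_nat_mul, hl, Real.exp_log r0]
  have eg : u x ^ p * ‖x‖ ^ (-α) = Real.exp (p * Real.log (u x) - α * l) := by
    rw [Real.rpow_def_of_pos ux, Real.rpow_def_of_pos r0, ← Real.exp_add]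
    congr 1; ring
  have hlf : Real.log f ≤ 0 := Real.log_nonpos f0.le f1
  set y := Real.log (u x) - γ * l with hy
  have h1 : vfun N a γ φ u x * ((‖x‖ ^ 2)⁻¹ * Real.exp (κ * l)) * f ≤
      Real.exp (a * y) * Real.exp (-(N * l)) := by
    refine (mul_le_of_le_one_right ?_ f1).trans ?_
    · unfold vfun; positivity
    · unfold vfun
      rw [e2, ← Real.exp_add, ← Real.exp_add, ← Real.exp_add]
      refine Real.exp_le_exp.2 ?_
      rw [← hf, ← hl, hκ, hy]
      have : (1 - a) * Real.log f ≤ 0 := mul_nonpos_of_nonneg_of_nonpos (by linarith) hlf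
      linarith
  refine h1.trans ?_
  rw [eN, eg]
  have h2 := mul_le_mul_of_nonneg_right (exp_young (y := y) ha hap hδ)
    (Real.exp_pos (-(N * l))).le
  refine h2.trans ?_
  rw [add_mul, mul_assoc (Real.exp _) (Real.exp _) (Real.exp _), ← Real.exp_add (p * y)]
  have h3 : Real.exp (p * y + -(N * l)) ≤ Real.exp (p * Real.log (u x) - α * l) := by
    refine Real.exp_le_exp.2 ?_
    rw [hy]
    nlinarith
  gcongr

/-- if `μ ≤ C_{H,Ω}` and `p·|γ_*| ≤ N - α` then `(E)` has no positive solution. -/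
theorem no_solution_of_p_subcritical
    (N : ℕ) (hN : 2 ≤ N) (Ω : Set (Euc N)) (hΩ : IsConeDomain N Ω)
    (lam1 : ℝ) (φ : Euc N → ℝ) (hphi : DirichletEigenpair N Ω lam1 φ)
    (α p q ρ μ : ℝ) (hα : 0 ≤ α) (hαN : α < N) (hp : 0 < p) (hq : 0 < q) (hρ : 0 < ρ)
    (hμ : μ ≤ CHconst N lam1)
    (hcrit : p * (-(gammaStar N lam1 μ)) ≤ (N : ℝ) - α) :
    ¬ ∃ u : Euc N → ℝ, IsPosSolE N ρ μ α p q Ω u := by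
  rintro ⟨u, hu, huc, u0, hfin, hE⟩
  set U := coneGT N ρ Ω with hU
  have hUo : IsOpen U := isOpen_coneGT hΩ hρ
  have hlap : ∀ x ∈ U, lap N u x ≤ -μ * (‖x‖ ^ 2)⁻¹ * u x := by
    intro x hx
    have h1 := hE x hx
    rw [rpow_neg_two_eq] at h1
    have h2 : 0 ≤ (rieszConv N α ρ Ω (fun y => u y ^ p) x).toReal * u x ^ q :=
      mul_nonneg ENNReal.toReal_nonneg (Real.rpow_nonneg (u0 x hx).le _)
    linarith
  -- the exponents
  set γ := gammaStar N lam1 μ with hγdef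
  set D := ((N : ℝ) - 2) ^ 2 + 4 * (lam1 - μ) with hD
  have D0 : 0 ≤ D := by
    unfold CHconst at hμ
    rw [hD]; nlinarith
  have hγ' : γ = (-((N : ℝ) - 2) - Real.sqrt D) / 2 := rfl
  have hsq := Real.mul_self_sqrt D0
  set β := Real.sqrt D with hβdef
  have β0 : 0 ≤ β := Real.sqrt_nonneg _
  set κ := -γ - ((N : ℝ) - 2) with hκdef
  have hγ : γ * (γ + ((N : ℝ) - 2)) = lam1 - μ := by
    rw [hγ']; nlinarith
  have hκ : κ * (κ + ((N : ℝ) - 2)) = lam1 - μ := by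
    rw [hκdef]; linarith
  have hβ : 2 * κ + ((N : ℝ) - 2) = β := by
    rw [hκdef, hγ']; ring
  set a := min p 1 with ha
  have a0 : 0 < a := lt_min hp one_pos
  have a1 : a ≤ 1 := min_le_right _ _
  have hap : a ≤ p := min_le_left _ _
  -- a point of the cone
  obtain ⟨ω, hω⟩ := hΩ.2.1.nonempty
  have hω1 : ‖ω‖ = 1 := by simpa using hΩ.1 hω
  have hmem : ∀ s : ℝ, 0 < s → ‖s • ω‖ = s ∧ ‖s • ω‖⁻¹ • (s • ω) = ω := by
    intro s hs
    have h1 : ‖s • ω‖ = s := by rw [norm_smul, hω1, Real.norm_of_nonneg hs.le, mul_one]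
    refine ⟨h1, ?_⟩
    rw [h1, smul_smul, inv_mul_cancel₀ hs.ne', one_smul]
  have hx0 : (ρ + 1) • ω ∈ U := by
    obtain ⟨h1, h2⟩ := hmem (ρ + 1) (by linarith)
    exact ⟨by rw [h1]; linarith, by rw [h2]; exact hω⟩
  set x0 := (ρ + 1) • ω with hx0def
  have gint := riesz_int hΩ hρ hα hu.continuousOn u0 (hfin x0 hx0)
  set t0 := Real.log (ρ + 2) with ht0
  have et0 : Real.exp t0 = ρ + 2 := Real.exp_log (by linarith)
  have hρt : ρ < Real.exp t0 := by rw [et0]; linarith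
  have shS : ∀ L, shell N Ω t0 L ⊆ U ∩ {y | ‖x0‖ < ‖y‖} := by
    intro L x hx
    refine ⟨shell_sub hρt hx, ?_⟩
    rw [shell_eq] at hx
    have h1 := hx.2.1
    rw [et0] at h1
    have h2 := (hmem (ρ + 1) (by linarith)).1
    show ‖x0‖ < ‖x‖
    rw [h2]; linarith
  set g : Euc N → ℝ := fun y => u y ^ p * ‖y‖ ^ (-α) with hg
  set I := ∫ y in U ∩ {y | ‖x0‖ < ‖y‖}, g y with hI
  have g0 : ∀ y ∈ U, 0 ≤ g y := fun y hy =>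
    mul_nonneg (Real.rpow_nonneg (u0 y hy).le _) (Real.rpow_nonneg (norm_nonneg _) _)
  have hSm : MeasurableSet (U ∩ {y : Euc N | ‖x0‖ < ‖y‖}) := (hUo.inter
    (isOpen_lt continuous_const continuous_norm)).measurableSet
  have I0 : 0 ≤ I := setIntegral_nonneg hSm fun y hy => g0 y hy.1
  have gle : ∀ L, ∫ y in shell N Ω t0 L, g y ≤ I := fun L =>
    setIntegral_mono_set gint ((ae_restrict_iff' hSm).2
      (Eventually.of_forall fun y hy => g0 y hy.1)) (Eventually.of_forall (shS L))
  obtain ⟨C1, C10, hC1⟩ := ring_int (by omega : 1 ≤ N) hΩ t0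
  obtain ⟨C, C0, Q, Qc, Q0, Ql, Qr, ⟨τ1, τ10, τ11, Qτ⟩, hk⟩ := exists_k β β0
  set w : Euc N → ℝ := fun x => vfun N a γ φ u x * ((‖x‖ ^ 2)⁻¹ * Real.exp (κ * Real.log ‖x‖)) *
      φ (‖x‖⁻¹ • x) with hw
  have w0 : ∀ x ∈ cone N Ω, 0 < w x := by
    intro x hx
    have h1 := hphi.pos _ hx.2
    have h2 : 0 < ‖x‖ := norm_pos_iff.2 hx.1
    simp only [hw]; unfold vfun; positivity
  have weak := fun (L : ℝ) (k : ℝ → ℝ) hk k0 kl kr => weak_ineq (L := L) (k := k) hΩ hphi hρ hu huc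
    u0 hlap hγ hκ hβ a0.le a1 hρt hk k0 kl kr
  -- regularity of `w` on shells
  have wreg : ∀ L, ContinuousOn w (shell N Ω t0 L) ∧ ∃ B, ∀ x ∈ shell N Ω t0 L, |w x| ≤ B := by
    intro L
    obtain ⟨h1, h2, -⟩ := weak L (fun _ => 0) contDiff_const (fun _ => le_rfl) (fun _ _ => rfl)
      (fun _ _ => rfl)
    exact ⟨h1, h2⟩
  have wq : ∀ L (r : ℝ → ℝ), Continuous r →
      IntegrableOn (fun x => w x * r (Real.log ‖x‖ - t0)) (shell N Ω t0 L) := fun L r hr =>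
    integ_shell hΩ (wreg L).1 (wreg L).2 hr
  have wint : ∀ L, IntegrableOn w (shell N Ω t0 L) := fun L => by
    simpa using wq L (fun _ => 1) continuous_const
  -- the positive constant
  set c0 := ∫ x in shell N Ω t0 1, w x * Q (Real.log ‖x‖ - t0) with hc0
  have wQ0 : ∀ L, ∀ x ∈ shell N Ω t0 L, 0 ≤ w x * Q (Real.log ‖x‖ - t0) := fun L x hx =>
    mul_nonneg (w0 x hx.1).le (Q0 _)
  have c0pos : 0 < c0 := by
    rw [hc0, setIntegral_pos_iff_support_of_nonneg_ae
      ((ae_restrict_iff' (shell_meas hΩ)).2 (Eventually.of_forall (wQ0 1))) (wq 1 Q Qc)]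
    have lc : ContinuousOn (fun x : Euc N => Real.log ‖x‖ - t0) (cone N Ω) := by
      refine ContinuousOn.sub (ContinuousOn.log continuous_norm.continuousOn ?_) continuousOn_const
      intro x hx
      exact norm_ne_zero_iff.2 hx.1
    have Oo : IsOpen (cone N Ω ∩ (fun x : Euc N => Real.log ‖x‖ - t0) ⁻¹'
        (Set.Ioo 0 1 ∩ {τ | 0 < Q τ})) :=
      lc.isOpen_inter_preimage (isOpen_cone hΩ)
        (isOpen_Ioo.inter (isOpen_lt continuous_const Qc))
    have hs : 0 < Real.exp (t0 + τ1) := Real.exp_pos _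
    obtain ⟨n1, n2⟩ := hmem _ hs
    refine (Oo.measure_pos volume ⟨Real.exp (t0 + τ1) • ω, ?_, ?_⟩).trans_le (measure_mono ?_)
    · refine ⟨norm_pos_iff.1 (by rw [n1]; exact hs), by rw [n2]; exact hω⟩
    · have : Real.log ‖Real.exp (t0 + τ1) • ω‖ - t0 = τ1 := by
        rw [n1, Real.log_exp]; ring
      show Real.log ‖Real.exp (t0 + τ1) • ω‖ - t0 ∈ Set.Ioo 0 1 ∩ {τ | 0 < Q τ}
      rw [this]
      exact ⟨⟨τ10, τ11⟩, Qτ⟩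
    · rintro x ⟨hx, hx2⟩
      obtain ⟨⟨h1, h2⟩, h3⟩ := hx2
      have h1 : 0 < Real.log ‖x‖ - t0 := h1
      have h2 : Real.log ‖x‖ - t0 < 1 := h2
      exact ⟨(mul_pos (w0 x hx) h3).ne', hx, by linarith, by linarith⟩
  -- main inequality
  have main : ∀ T, 1 ≤ T → c0 ≤ C / T * ∫ x in shell N Ω t0 (2 * T), w x := by
    intro T hT
    obtain ⟨k, kcd, k0, kl, kr, kQ⟩ := hk T hT
    obtain ⟨-, -, h3⟩ := weak (2 * T) k kcd k0 kl kr
    have hk1 : ContDiff ℝ 1 (deriv k) := by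
      rw [show (2 : WithTop ℕ∞) = 1 + 1 by norm_num, contDiff_succ_iff_deriv] at kcd
      exact kcd.2.2
    have rc : Continuous (fun t => deriv (deriv k) t + β * deriv k t) :=
      (hk1.continuous_deriv le_rfl).add (continuous_const.mul hk1.continuous)
    have i1 := wq (2 * T) _ rc
    have i2 := wq (2 * T) Q Qc
    have i3 : IntegrableOn (fun x => C / T * w x) (shell N Ω t0 (2 * T)) :=
      (wint (2 * T)).const_mul _
    have h4 : ∫ x in shell N Ω t0 (2 * T), (w x * Q (Real.log ‖x‖ - t0) - C / T * w x) ≤ 0 := by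
      refine le_trans (setIntegral_mono_on (i2.sub i3) i1 (shell_meas hΩ) fun x hx => ?_) h3
      have h2 : t0 ≤ Real.log ‖x‖ ∧ Real.log ‖x‖ ≤ t0 + 2 * T := hx.2
      have h5 := kQ (Real.log ‖x‖ - t0) (by linarith [h2.1]) (by linarith [h2.2])
      have h6 := mul_le_mul_of_nonneg_left h5 (w0 x hx.1).le
      linarith
    rw [integral_sub i2 i3, integral_const_mul] at h4
    have h7 : c0 ≤ ∫ x in shell N Ω t0 (2 * T), w x * Q (Real.log ‖x‖ - t0) := by
      refine setIntegral_mono_set i2 ((ae_restrict_iff' (shell_meas hΩ)).2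
        (Eventually.of_forall (wQ0 _))) (Eventually.of_forall ?_)
      rintro x ⟨h1, h2, h3⟩
      exact ⟨h1, h2, by linarith⟩
    linarith
  -- bound of the right-hand side
  have upper : ∀ δ, 0 < δ → ∀ L, 0 ≤ L → ∫ x in shell N Ω t0 L, w x ≤
      δ * (C1 * L) + Real.exp ((a - p) * (Real.log δ / a)) * I := by
    intro δ hδ L hL
    obtain ⟨j1, j2⟩ := hC1 L hL
    have j3 : IntegrableOn g (shell N Ω t0 L) := gint.mono_set (shS L)
    have j4 := j1.const_mul δ
    have j5 := j3.const_mul (Real.exp ((a - p) * (Real.log δ / a)))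
    have h1 : ∫ x in shell N Ω t0 L, w x ≤ ∫ x in shell N Ω t0 L, (δ * (‖x‖ ^ N)⁻¹ +
        Real.exp ((a - p) * (Real.log δ / a)) * g x) := by
      refine setIntegral_mono_on (wint L) (j4.add j5) (shell_meas hΩ) fun x hx => ?_
      have hxU := shell_sub hρt hx
      refine w_bound ?_ (u0 x hxU) (hphi.pos _ hx.1.2) (hphi.le_one _ (subset_closure hx.1.2))
        hκdef a0 a1 hap hcrit hδ
      rw [shell_eq] at hx
      have := hx.2.1
      rw [et0] at this
      linarith
    rw [integral_add j4 j5, integral_const_mul, integral_const_mul] at h1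
    refine h1.trans (add_le_add ?_ ?_)
    · exact mul_le_mul_of_nonneg_left j2 hδ.le
    · exact mul_le_mul_of_nonneg_left (gle L) (Real.exp_pos _).le
  -- conclusion
  set δ := c0 / (4 * C * (C1 + 1)) with hδ
  have δ0 : 0 < δ := by positivity
  set E := Real.exp ((a - p) * (Real.log δ / a)) * I with hEdef
  have E0 : 0 ≤ E := mul_nonneg (Real.exp_pos _).le I0
  set T := 1 + 4 * C * E / c0 with hT
  have T1 : 1 ≤ T := by
    have : 0 ≤ 4 * C * E / c0 := by positivity
    linarith
  have T0 : 0 < T := by linarith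
  have h1 := main T T1
  have h2 := upper δ δ0 (2 * T) (by linarith)
  have h3 : c0 ≤ C / T * (δ * (C1 * (2 * T)) + E) :=
    h1.trans (mul_le_mul_of_nonneg_left h2 (by positivity))
  have h4 : C / T * (δ * (C1 * (2 * T)) + E) = 2 * C * C1 * δ + C * E / T := by
    field_simp
  have h5 : 2 * C * C1 * δ ≤ c0 / 2 := by
    have e : c0 / 2 = 2 * C * (C1 + 1) * δ := by
      rw [hδ]; field_simp; norm_num
    rw [e]
    gcongr
    linarith
  have h6 : C * E / T ≤ c0 / 4 := by
    rw [div_le_iff₀ T0, hT]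
    have : c0 / 4 * (1 + 4 * C * E / c0) = c0 / 4 + C * E := by field_simp
    rw [this]; linarith
  linarith
end
end
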